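/- arXiv:1403.6252 — 3 statements merged into one kernel-verified Lean document; each statement's English description precedes it below -/
import Mathlib

section
/- (Decay property of Gowdy spacetimes in areal coordinates.) There exists a constant K > 0, depending only on the solution, such that 𝓔(R) ≤ K/R for all R ≥ R₀. -/
open Real MeasureTheory Set

/-- Partial derivative with respect to the first (time) variable `R`. -/
noncomputable def pdR (f : ℝ → ℝ → ℝ) (R θ : ℝ) : ℝ := deriv (fun r => f r θ) R

/-- Partial derivative with respect to the second (space) variable `θ`. -/
noncomputable def pdT (f : ℝ → ℝ → ℝ) (R θ : ℝ) : ℝ := deriv (fun t => f R t) θ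

theorem gron (R₀ : ℝ) (f f' φ φ' : ℝ → ℝ)
    (hf : ∀ R, R₀ ≤ R → HasDerivAt f (f' R) R)
    (hφ : ∀ R, R₀ ≤ R → HasDerivAt φ (φ' R) R)
    (h : ∀ R, R₀ ≤ R → f' R ≤ - φ' R * f R) :
    ∀ R, R₀ ≤ R → f R * exp (φ R) ≤ f R₀ * exp (φ R₀) := by
  have hd : ∀ R, R₀ ≤ R → HasDerivAt (fun r => f r * exp (φ r))
      (f' R * exp (φ R) + f R * (exp (φ R) * φ' R)) R := fun R hR =>
    (hf R hR).mul (hφ R hR).exp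
  have anti : AntitoneOn (fun r => f r * exp (φ r)) (Ici R₀) := by
    apply antitoneOn_of_deriv_nonpos (convex_Ici R₀)
    · intro x hx
      exact (hd x hx).continuousAt.continuousWithinAt
    · intro x hx
      rw [interior_Ici] at hx
      exact (hd x (le_of_lt hx)).differentiableAt.differentiableWithinAt
    · intro x hx
      rw [interior_Ici] at hx
      rw [(hd x (le_of_lt hx)).deriv]
      have := h x (le_of_lt hx)
      have he := exp_pos (φ x)
      nlinarith
  intro R hR
  exact anti (self_mem_Ici) hR hR

theorem ode_decay (R₀ : ℝ) (hR₀ : 0 < R₀) (C : ℝ) (hC : 1 ≤ C)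
    (E X Y kU kA pU pA N : ℝ → ℝ)
    (hkU : ∀ R, R₀ ≤ R → 0 ≤ kU R) (hkA : ∀ R, R₀ ≤ R → 0 ≤ kA R)
    (hpU : ∀ R, R₀ ≤ R → 0 ≤ pU R) (hpA : ∀ R, R₀ ≤ R → 0 ≤ pA R)
    (hE : ∀ R, R₀ ≤ R → E R = kU R + kA R + pU R + pA R)
    (hE' : ∀ R, R₀ ≤ R → HasDerivAt E (-(2 / R) * (kU R + kA R)) R)
    (hY' : ∀ R, R₀ ≤ R → HasDerivAt Y (-(Y R / R) + 2 * (pA R - kA R)) R)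
    (hX' : ∀ R, R₀ ≤ R → HasDerivAt X
      (kU R - pU R - (Y R) ^ 2 / (2 * π) - X R / R + N R) R)
    (hN : ∀ R, R₀ ≤ R → |N R| ≤ C * √(E R) * (pA R + kA R))
    (hX : ∀ R, R₀ ≤ R → |X R| ≤ C * E R)
    (hY : ∀ R, R₀ ≤ R → |Y R| ≤ C * √(E R)) :
    ∃ K : ℝ, 0 < K ∧ ∀ R, R₀ ≤ R → E R ≤ K / R := by
  have hEnn : ∀ R, R₀ ≤ R → 0 ≤ E R := by
    intro R hR
    have := hkU R hR; have := hkA R hR; have := hpU R hR; have := hpA R hR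
    rw [hE R hR]; positivity
  have hElt : ∀ R, R₀ ≤ R → E R ≤ E R₀ := by
    have := gron R₀ E _ (fun _ => 0) (fun _ => 0) hE' (fun R _ => hasDerivAt_const R 0) (by
      intro R hR
      have := hkU R hR; have := hkA R hR
      have hRp : 0 < R := by linarith
      have : 0 ≤ 2 / R * (kU R + kA R) := by positivity
      linarith)
    simpa using this
  set s0 := √(E R₀) with hs0
  have hs0n : 0 ≤ s0 := sqrt_nonneg _
  have hslt : ∀ R, R₀ ≤ R → √(E R) ≤ s0 := fun R hR => sqrt_le_sqrt (hElt R hR)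
  have hss : ∀ R, R₀ ≤ R → E R = √(E R) * √(E R) := fun R hR =>
    (mul_self_sqrt (hEnn R hR)).symm
  obtain ⟨M, hM1, hMs, hME⟩ : ∃ M : ℝ, 1 ≤ M ∧ C * s0 ≤ M ∧ C * E R₀ ≤ M :=
    ⟨max 1 (max (C * s0) (C * E R₀)), le_max_left _ _,
      le_trans (le_max_left _ _) (le_max_right _ _), le_trans (le_max_right _ _) (le_max_right _ _)⟩
  have hXM : ∀ R, R₀ ≤ R → |X R| ≤ M := fun R hR => by
    have := hX R hR
    have := hElt R hR
    nlinarith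
  have hYM : ∀ R, R₀ ≤ R → |Y R| ≤ M := fun R hR => by
    have := hY R hR
    have := hslt R hR
    nlinarith
  have hNM : ∀ R, R₀ ≤ R → N R ≤ M * (pA R + kA R) := fun R hR => by
    have h1 := hN R hR
    have h2 := hslt R hR
    have h3 := hkA R hR
    have h4 := hpA R hR
    have h5 : C * √(E R) ≤ M := by nlinarith
    have h6 := mul_le_mul_of_nonneg_right h5 (add_nonneg h4 h3)
    linarith [le_abs_self (N R)]
  -- Step 1: polynomial decay
  obtain ⟨δ, hδ, K1, hK1, hdec⟩ : ∃ δ : ℝ, 0 < δ ∧ ∃ K1 : ℝ, 0 ≤ K1 ∧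
      ∀ R, R₀ ≤ R → E R ≤ K1 * exp (-(δ * log R)) := by
    set a : ℝ := (M + 1) / 2 with ha
    set b : ℝ := M + 1 with hb
    have hb2 : 2 ≤ b := by linarith
    set C1 : ℝ := 2 * M + 2 * a * M with hC1
    have hC1p : 0 < C1 := by positivity
    set H : ℝ → ℝ := fun R => X R * R⁻¹ - a * (Y R * R⁻¹) + b * E R + 3 * C1 * R⁻¹ with hH
    have hHd : ∀ R, R₀ ≤ R → HasDerivAt H
        (((kU R - pU R - (Y R) ^ 2 / (2 * π) - X R / R + N R) * R⁻¹ + X R * (-(R ^ 2)⁻¹))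
          - a * ((-(Y R / R) + 2 * (pA R - kA R)) * R⁻¹ + Y R * (-(R ^ 2)⁻¹))
          + b * (-(2 / R) * (kU R + kA R)) + 3 * C1 * (-(R ^ 2)⁻¹)) R := by
      intro R hR
      have hRne : R ≠ 0 := by linarith
      have hi := hasDerivAt_inv hRne
      exact ((((hX' R hR).mul hi).sub (((hY' R hR).mul hi).const_mul a)).add
        ((hE' R hR).const_mul b)).add (hi.const_mul (3 * C1))
    have hlow : ∀ R, R₀ ≤ R → b * E R ≤ H R := by
      intro R hR
      have hRp : 0 < R⁻¹ := inv_pos.mpr (by linarith)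
      have h1 := abs_le.mp (hXM R hR)
      have h2 := abs_le.mp (hYM R hR)
      have h3 : a * Y R ≤ a * M := by apply mul_le_mul_of_nonneg_left h2.2; positivity
      have h4 : 0 ≤ (X R - a * Y R + 3 * C1) * R⁻¹ := by
        apply mul_nonneg _ hRp.le
        have : 0 ≤ a * M := by positivity
        linarith
      simp only [hH]; linarith
    have hup : ∀ R, R₀ ≤ R → H R ≤ b * E R + 4 * C1 * R⁻¹ := by
      intro R hR
      have hRp : 0 < R⁻¹ := inv_pos.mpr (by linarith)
      have h1 := abs_le.mp (hXM R hR)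
      have h2 := abs_le.mp (hYM R hR)
      have h3 : a * (- Y R) ≤ a * M := by
        apply mul_le_mul_of_nonneg_left (by linarith); positivity
      have h4 : 0 ≤ (C1 - (X R - a * Y R)) * R⁻¹ := by
        apply mul_nonneg _ hRp.le
        have : 0 ≤ a * M := by positivity
        linarith
      simp only [hH]; linarith
    have key := gron R₀ H _ (fun R => b⁻¹ * log R) (fun R => b⁻¹ * R⁻¹) hHd
      (fun R hR => (hasDerivAt_log (by linarith)).const_mul _) (by
      intro R hR
      have hRp : 0 < R⁻¹ := inv_pos.mpr (by linarith)
      have h1 := abs_le.mp (hXM R hR)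
      have h2 := abs_le.mp (hYM R hR)
      have h3 : a * (Y R) ≤ a * M := by
        apply mul_le_mul_of_nonneg_left (by linarith); positivity
      have hn := hNM R hR
      have hk1 := hkU R hR
      have hY2 : 0 ≤ Y R ^ 2 / (2 * π) := by positivity
      have e := hE R hR
      -- bracket
      have hbr : kU R - pU R - (Y R) ^ 2 / (2 * π) + N R - a * (2 * (pA R - kA R))
          - 2 * b * (kU R + kA R) ≤ - E R := by
        have : 0 ≤ M * kU R := by positivity
        rw [e]; simp only [ha, hb]; linarith
      have hrem : -2 * X R + 2 * (a * Y R) ≤ C1 := by rw [hC1]; linarith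
      have hu := hup R hR
      have hbE : b⁻¹ * H R ≤ E R + 4 * C1 * R⁻¹ * b⁻¹ := by
        have := mul_le_mul_of_nonneg_left hu (inv_nonneg.mpr (by linarith : 0 ≤ b))
        have hbb : b⁻¹ * b = 1 := inv_mul_cancel₀ (by linarith)
        calc _ ≤ _ := this
          _ = (b⁻¹ * b) * E R + 4 * C1 * R⁻¹ * b⁻¹ := by ring
          _ = _ := by rw [hbb]; ring
      have hbi : b⁻¹ ≤ 1 / 2 := by
        rw [inv_le_comm₀ (by linarith) (by norm_num)]; norm_num; exact hb2
      have hA := mul_le_mul_of_nonneg_right hbr hRp.le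
      have hB := mul_le_mul_of_nonneg_right hrem (mul_nonneg hRp.le hRp.le)
      have hD := mul_le_mul_of_nonneg_right hbE hRp.le
      have hF := mul_le_mul_of_nonneg_left hbi (show 0 ≤ 4 * C1 * (R⁻¹ * R⁻¹) by positivity)
      simp only [div_eq_mul_inv, pow_two, mul_inv] at *
      nlinarith)
    refine ⟨b⁻¹, by positivity, H R₀ * exp (b⁻¹ * log R₀), ?_, ?_⟩
    · have := hlow R₀ le_rfl
      have := hEnn R₀ le_rfl
      have : 0 ≤ H R₀ := by nlinarith
      positivity
    · intro R hR
      have h1 := key R hR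
      have h2 := hlow R hR
      have h3 := hEnn R hR
      have h4 : E R ≤ H R := by nlinarith
      calc E R ≤ H R := h4
        _ = H R * exp (b⁻¹ * log R) * exp (-(b⁻¹ * log R)) := by
          rw [mul_assoc, ← exp_add]; simp
        _ ≤ _ := mul_le_mul_of_nonneg_right h1 (exp_pos _).le
  -- Step 2
  set ε := δ / 2 with hε
  have hεp : 0 < ε := by positivity
  have hsq : ∀ R, R₀ ≤ R → √(E R) ≤ √K1 * exp (-(ε * log R)) := by
    intro R hR
    have h1 : K1 * exp (-(δ * log R)) = (√K1 * exp (-(ε * log R))) ^ 2 := by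
      rw [mul_pow, sq_sqrt hK1, ← exp_nat_mul]
      congr 2; rw [hε]; push_cast; ring
    calc √(E R) ≤ √((√K1 * exp (-(ε * log R))) ^ 2) := sqrt_le_sqrt (h1 ▸ hdec R hR)
      _ = _ := sqrt_sq (by positivity)
  set W : ℝ → ℝ := fun R => R * E R + X R - Y R / 2 + (2 * M + 1) with hW
  have hWd : ∀ R, R₀ ≤ R → HasDerivAt W
      ((1 * E R + R * (-(2 / R) * (kU R + kA R)))
        + (kU R - pU R - (Y R) ^ 2 / (2 * π) - X R / R + N R)
        - (-(Y R / R) + 2 * (pA R - kA R)) / 2) R := by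
    intro R hR
    exact (((((hasDerivAt_id R).mul (hE' R hR)).add (hX' R hR)).sub
      ((hY' R hR).div_const 2)).add_const (2 * M + 1))
  have hWl : ∀ R, R₀ ≤ R → R * E R + 1 ≤ W R := by
    intro R hR
    have h1 := abs_le.mp (hXM R hR)
    have h2 := abs_le.mp (hYM R hR)
    simp only [hW]; linarith
  set c := C * (s0 + 2) * √K1 with hc
  have hcn : 0 ≤ c := by positivity
  have key := gron R₀ W _ (fun R => c / ε * exp (-(ε * log R)))
    (fun R => c / ε * (exp (-(ε * log R)) * -(ε * R⁻¹))) hWd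
    (fun R hR => ((((hasDerivAt_log (by linarith)).const_mul ε).neg).exp.const_mul (c / ε))) (by
    intro R hR
    have hR0 : 0 < R := by linarith
    have hRp : 0 < R⁻¹ := inv_pos.mpr hR0
    have h1 := abs_le.mp (hX R hR)
    have h2 := abs_le.mp (hY R hR)
    have h3 := abs_le.mp (hN R hR)
    have hY2 : 0 ≤ Y R ^ 2 / (2 * π) := by positivity
    have e := hE R hR
    have hl := hWl R hR
    have hEn := hEnn R hR
    have hsn := sqrt_nonneg (E R)
    have hW1 : 1 ≤ W R := by nlinarith
    have e1 : -(c / ε * (exp (-(ε * log R)) * -(ε * R⁻¹))) * W R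
        = C * (s0 + 2) * (√K1 * exp (-(ε * log R))) * (R⁻¹ * W R) := by
      rw [hc]; field_simp
    rw [e1]
    have step : C * (s0 + 2) * √(E R) * (R⁻¹ * W R)
        ≤ C * (s0 + 2) * (√K1 * exp (-(ε * log R))) * (R⁻¹ * W R) := by
      have := hsq R hR
      gcongr
    refine le_trans ?_ step
    have t1 : R * (-(2 / R) * (kU R + kA R)) = -2 * (kU R + kA R) := by field_simp
    rw [t1]
    have u1 : -(X R / R) ≤ C * s0 * √(E R) * (R⁻¹ * W R) := by
      have : C * E R ≤ C * s0 * √(E R) := by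
        have := hss R hR
        have h5 := mul_le_mul_of_nonneg_right (hslt R hR) hsn
        have : E R ≤ s0 * √(E R) := by linarith
        rw [mul_assoc]
        exact mul_le_mul_of_nonneg_left this (by linarith)
      calc -(X R / R) = (-X R) * (R⁻¹ * 1) := by rw [div_eq_mul_inv]; ring
        _ ≤ (C * s0 * √(E R)) * (R⁻¹ * 1) := by
            apply mul_le_mul_of_nonneg_right (by linarith); positivity
        _ ≤ _ := by gcongr
    have u2 : Y R / R / 2 ≤ C * √(E R) * (R⁻¹ * W R) := by
      have h0 : 0 ≤ C * √(E R) := by positivity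
      calc Y R / R / 2 = (Y R / 2) * (R⁻¹ * 1) := by rw [div_eq_mul_inv]; ring
        _ ≤ (C * √(E R)) * (R⁻¹ * 1) := by
            apply mul_le_mul_of_nonneg_right (by linarith); positivity
        _ ≤ _ := by gcongr
    have u3 : N R ≤ C * √(E R) * (R⁻¹ * W R) := by
      have h6 : pA R + kA R ≤ E R := by linarith [hkU R hR, hpU R hR]
      have h7 : E R ≤ R⁻¹ * W R := by
        rw [le_inv_mul_iff₀ hR0]; linarith
      calc N R ≤ _ := h3.2
        _ ≤ _ := by gcongr; linarith
    linarith)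
  refine ⟨W R₀ * exp (c / ε * exp (-(ε * log R₀))), ?_, ?_⟩
  · have := hWl R₀ le_rfl
    have := hEnn R₀ le_rfl
    have : 0 < W R₀ := by nlinarith
    positivity
  · intro R hR
    have hR0 : 0 < R := by linarith
    rw [le_div_iff₀ hR0]
    have h1 := key R hR
    have h2 := hWl R hR
    have hEn := hEnn R hR
    have h3 : 1 ≤ exp (c / ε * exp (-(ε * log R))) := one_le_exp (by positivity)
    have : 0 ≤ W R := by nlinarith
    have h4 := le_mul_of_one_le_right this h3
    linarith [mul_comm R (E R)]

theorem pdR_eq {f : ℝ → ℝ → ℝ} (hf : ContDiff ℝ (⊤ : ℕ∞) (Function.uncurry f)) (R θ : ℝ) :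
    HasDerivAt (fun r => f r θ) (fderiv ℝ (Function.uncurry f) (R, θ) (1, 0)) R := by
  have h1 : HasFDerivAt (Function.uncurry f) (fderiv ℝ (Function.uncurry f) (R, θ)) (R, θ) :=
    (hf.differentiable (by simp) (R, θ)).hasFDerivAt
  exact h1.comp_hasDerivAt R ((hasDerivAt_id R).prodMk (hasDerivAt_const R θ))

theorem pdT_eq {f : ℝ → ℝ → ℝ} (hf : ContDiff ℝ (⊤ : ℕ∞) (Function.uncurry f)) (R θ : ℝ) :
    HasDerivAt (fun t => f R t) (fderiv ℝ (Function.uncurry f) (R, θ) (0, 1)) θ := by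
  have h1 : HasFDerivAt (Function.uncurry f) (fderiv ℝ (Function.uncurry f) (R, θ)) (R, θ) :=
    (hf.differentiable (by simp) (R, θ)).hasFDerivAt
  exact h1.comp_hasDerivAt θ ((hasDerivAt_const θ R).prodMk (hasDerivAt_id θ))

theorem hasDerivAt_pdR {f : ℝ → ℝ → ℝ} (hf : ContDiff ℝ (⊤ : ℕ∞) (Function.uncurry f)) (R θ : ℝ) :
    HasDerivAt (fun r => f r θ) (pdR f R θ) R :=
  (pdR_eq hf R θ).differentiableAt.hasDerivAt

theorem hasDerivAt_pdT {f : ℝ → ℝ → ℝ} (hf : ContDiff ℝ (⊤ : ℕ∞) (Function.uncurry f)) (R θ : ℝ) :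
    HasDerivAt (fun t => f R t) (pdT f R θ) θ :=
  (pdT_eq hf R θ).differentiableAt.hasDerivAt

theorem uncurry_pdR {f : ℝ → ℝ → ℝ} (hf : ContDiff ℝ (⊤ : ℕ∞) (Function.uncurry f)) :
    Function.uncurry (pdR f) = fun p => fderiv ℝ (Function.uncurry f) p (1, 0) := by
  funext ⟨R, θ⟩
  exact (pdR_eq hf R θ).deriv

theorem uncurry_pdT {f : ℝ → ℝ → ℝ} (hf : ContDiff ℝ (⊤ : ℕ∞) (Function.uncurry f)) :
    Function.uncurry (pdT f) = fun p => fderiv ℝ (Function.uncurry f) p (0, 1) := by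
  funext ⟨R, θ⟩
  exact (pdT_eq hf R θ).deriv

theorem contDiff_pdR {f : ℝ → ℝ → ℝ} (hf : ContDiff ℝ (⊤ : ℕ∞) (Function.uncurry f)) :
    ContDiff ℝ (⊤ : ℕ∞) (Function.uncurry (pdR f)) := by
  rw [uncurry_pdR hf]
  exact (hf.fderiv_right (m := (⊤ : ℕ∞)) (by simp)).clm_apply contDiff_const

theorem contDiff_pdT {f : ℝ → ℝ → ℝ} (hf : ContDiff ℝ (⊤ : ℕ∞) (Function.uncurry f)) :
    ContDiff ℝ (⊤ : ℕ∞) (Function.uncurry (pdT f)) := by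
  rw [uncurry_pdT hf]
  exact (hf.fderiv_right (m := (⊤ : ℕ∞)) (by simp)).clm_apply contDiff_const

theorem pd_comm {f : ℝ → ℝ → ℝ} (hf : ContDiff ℝ (⊤ : ℕ∞) (Function.uncurry f)) (R θ : ℝ) :
    pdR (pdT f) R θ = pdT (pdR f) R θ := by
  have hd : DifferentiableAt ℝ (fderiv ℝ (Function.uncurry f)) (R, θ) :=
    (hf.fderiv_right (m := (⊤ : ℕ∞)) (by simp)).differentiable (by simp) _
  have h1 : pdR (pdT f) R θ = fderiv ℝ (fderiv ℝ (Function.uncurry f)) (R, θ) (1, 0) (0, 1) := by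
    have := (pdR_eq (contDiff_pdT hf) R θ).deriv
    unfold pdR
    rw [this, uncurry_pdT hf, fderiv_clm_apply hd (by fun_prop)]
    simp
  have h2 : pdT (pdR f) R θ = fderiv ℝ (fderiv ℝ (Function.uncurry f)) (R, θ) (0, 1) (1, 0) := by
    have := (pdT_eq (contDiff_pdR hf) R θ).deriv
    unfold pdT
    rw [this, uncurry_pdR hf, fderiv_clm_apply hd (by fun_prop)]
    simp
  rw [h1, h2]
  exact (hf.contDiffAt.isSymmSndFDerivAt (by simp only [minSmoothness_of_isRCLikeNormedField]; exact WithTop.coe_le_coe.mpr (le_top : (2 : ℕ∞) ≤ ⊤))) _ _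

theorem periodic_pdR {f : ℝ → ℝ → ℝ} {c : ℝ} (h : ∀ R θ, f R (θ + c) = f R θ) (R θ : ℝ) :
    pdR f R (θ + c) = pdR f R θ := by
  unfold pdR; simp only [h]

theorem periodic_pdT {f : ℝ → ℝ → ℝ} {c : ℝ} (h : ∀ R θ, f R (θ + c) = f R θ) (R θ : ℝ) :
    pdT f R (θ + c) = pdT f R θ := by
  unfold pdT
  rw [← deriv_comp_add_const]
  simp only [h]

theorem deriv_int (F F' : ℝ → ℝ → ℝ) (hF : Continuous (Function.uncurry F))
    (hF' : Continuous (Function.uncurry F'))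
    (hd : ∀ R θ, HasDerivAt (fun r => F r θ) (F' R θ) R) (R : ℝ) :
    HasDerivAt (fun r => ∫ θ in (0:ℝ)..(2 * π), F r θ) (∫ θ in (0:ℝ)..(2 * π), F' R θ) R := by
  obtain ⟨B, hB⟩ := ((isCompact_Icc (a := R - 1) (b := R + 1)).prod
    (isCompact_uIcc (a := (0:ℝ)) (b := 2 * π))).exists_bound_of_continuousOn hF'.continuousOn
  have c1 : ∀ r, Continuous (F r) := fun r => hF.comp (Continuous.prodMk_right r)
  have c2 : ∀ r, Continuous (F' r) := fun r => hF'.comp (Continuous.prodMk_right r)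
  refine (intervalIntegral.hasDerivAt_integral_of_dominated_loc_of_deriv_le
    (s := Icc (R - 1) (R + 1)) (bound := fun _ => B)
    (Icc_mem_nhds (by linarith) (by linarith)) ?_ ?_ ?_ ?_ ?_ ?_).2
  · exact Filter.Eventually.of_forall fun r => (c1 r).aestronglyMeasurable
  · exact (c1 R).intervalIntegrable _ _
  · exact (c2 R).aestronglyMeasurable
  · exact Filter.Eventually.of_forall fun t ht x hx => hB (x, t) ⟨hx, uIoc_subset_uIcc ht⟩
  · exact intervalIntegrable_const
  · exact Filter.Eventually.of_forall fun t _ x _ => hd x t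

theorem int_deriv_zero (f f' : ℝ → ℝ) (hf' : Continuous f')
    (hd : ∀ θ, HasDerivAt f (f' θ) θ) (hp : f (0 + 2 * π) = f 0) :
    ∫ θ in (0:ℝ)..(2 * π), f' θ = 0 := by
  rw [intervalIntegral.integral_eq_sub_of_hasDerivAt (fun x _ => hd x)
    (hf'.intervalIntegrable _ _)]
  rw [zero_add] at hp
  rw [hp, sub_self]

theorem cs_int (f : ℝ → ℝ) (hf : Continuous f) :
    (∫ θ in (0:ℝ)..(2 * π), f θ) ^ 2 ≤ 2 * π * ∫ θ in (0:ℝ)..(2 * π), f θ ^ 2 := by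
  set I := ∫ θ in (0:ℝ)..(2 * π), f θ with hI
  have h0 : 0 ≤ ∫ θ in (0:ℝ)..(2 * π), (f θ * (2 * π) - I) ^ 2 :=
    intervalIntegral.integral_nonneg (by positivity) fun _ _ => sq_nonneg _
  have e : ∫ θ in (0:ℝ)..(2 * π), (f θ * (2 * π) - I) ^ 2
      = (2 * π) ^ 2 * (∫ θ in (0:ℝ)..(2 * π), f θ ^ 2) - 2 * (2 * π) * I * I
        + 2 * π * I ^ 2 := by
    have : ∀ θ, (f θ * (2 * π) - I) ^ 2
      = ((2 * π) ^ 2 * f θ ^ 2 - (2 * (2 * π) * I) * f θ) + I ^ 2 := fun θ => by ring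
    simp only [this]
    rw [intervalIntegral.integral_add (by apply Continuous.intervalIntegrable; fun_prop)
        (by apply Continuous.intervalIntegrable; fun_prop),
      intervalIntegral.integral_sub (by apply Continuous.intervalIntegrable; fun_prop)
        (by apply Continuous.intervalIntegrable; fun_prop),
      intervalIntegral.integral_const_mul, intervalIntegral.integral_const_mul,
      intervalIntegral.integral_const, ← hI]
    simp
  rw [e] at h0
  have hp : 0 < 2 * π := by positivity
  have : 0 ≤ (2 * π) * (2 * π * (∫ θ in (0:ℝ)..(2 * π), f θ ^ 2) - I ^ 2) := by linarith
  have := nonneg_of_mul_nonneg_right this hp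
  linarith

/-- Oscillation bound. -/
theorem osc_bound (f f' : ℝ → ℝ) (hf' : Continuous f') (hd : ∀ θ, HasDerivAt f (f' θ) θ)
    (θ : ℝ) (hθ : θ ∈ Icc 0 (2 * π)) :
    |f θ - (∫ φ in (0:ℝ)..(2 * π), f φ) / (2 * π)|
      ≤ √(2 * π * ∫ φ in (0:ℝ)..(2 * π), f' φ ^ 2) := by
  have hp : 0 < 2 * π := by positivity
  set S := √(2 * π * ∫ φ in (0:ℝ)..(2 * π), f' φ ^ 2) with hS
  have hfc : Continuous f := continuous_iff_continuousAt.mpr fun x => (hd x).continuousAt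
  have hab : ∫ φ in (0:ℝ)..(2 * π), |f' φ| ≤ S := by
    apply le_sqrt_of_sq_le
    have := cs_int (fun φ => |f' φ|) hf'.abs
    simpa only [sq_abs] using this
  have hpt : ∀ φ ∈ Icc 0 (2 * π), |f θ - f φ| ≤ S := by
    intro φ hφ
    rw [← intervalIntegral.integral_eq_sub_of_hasDerivAt (fun x _ => hd x)
      (hf'.intervalIntegrable φ θ)]
    refine le_trans ?_ hab
    have h1 := intervalIntegral.norm_integral_le_integral_norm_uIoc (f := f') (a := φ) (b := θ)
      (μ := volume)
    refine le_trans h1 ?_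
    rw [intervalIntegral.integral_of_le hp.le]
    apply setIntegral_mono_set
    · exact (hf'.abs.integrableOn_Icc).mono_set Ioc_subset_Icc_self
    · exact Filter.Eventually.of_forall fun x => abs_nonneg _
    · apply LE.le.eventuallyLE
      intro x hx
      rw [mem_uIoc] at hx
      rcases hx with hx | hx
      · exact ⟨lt_of_le_of_lt hφ.1 hx.1, hx.2.trans hθ.2⟩
      · exact ⟨lt_of_le_of_lt hθ.1 hx.1, hx.2.trans hφ.2⟩
  have h2 : ∫ φ in (0:ℝ)..(2 * π), (f θ - f φ) = 2 * π * f θ - ∫ φ in (0:ℝ)..(2 * π), f φ := by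
    rw [intervalIntegral.integral_sub (by simp) (hfc.intervalIntegrable _ _)]
    simp
  have h3 : ‖∫ φ in (0:ℝ)..(2 * π), (f θ - f φ)‖ ≤ S * |2 * π - 0| := by
    apply intervalIntegral.norm_integral_le_of_norm_le_const
    intro x hx
    rw [uIoc_of_le hp.le] at hx
    exact hpt x ⟨hx.1.le, hx.2⟩
  rw [h2, sub_zero, abs_of_pos hp, norm_eq_abs] at h3
  have h4 : f θ - (∫ φ in (0:ℝ)..(2 * π), f φ) / (2 * π)
      = (2 * π * f θ - ∫ φ in (0:ℝ)..(2 * π), f φ) / (2 * π) := by field_simp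
  rw [h4, abs_div, abs_of_pos hp, div_le_iff₀ hp]
  exact h3

theorem lin4 (g f1 f2 f3 f4 : ℝ → ℝ) (hg : Continuous g) (h1 : Continuous f1)
    (h2 : Continuous f2) (h3 : Continuous f3) (h4 : Continuous f4) (c1 c2 c3 c4 : ℝ) :
    ∫ θ in (0:ℝ)..(2 * π), (g θ + c1 * f1 θ + c2 * f2 θ + c3 * f3 θ + c4 * f4 θ)
      = (∫ θ in (0:ℝ)..(2 * π), g θ) + c1 * (∫ θ in (0:ℝ)..(2 * π), f1 θ)
        + c2 * (∫ θ in (0:ℝ)..(2 * π), f2 θ) + c3 * (∫ θ in (0:ℝ)..(2 * π), f3 θ)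
        + c4 * (∫ θ in (0:ℝ)..(2 * π), f4 θ) := by
  rw [intervalIntegral.integral_add (by apply Continuous.intervalIntegrable; fun_prop)
        (by apply Continuous.intervalIntegrable; fun_prop),
    intervalIntegral.integral_add (by apply Continuous.intervalIntegrable; fun_prop)
        (by apply Continuous.intervalIntegrable; fun_prop),
    intervalIntegral.integral_add (by apply Continuous.intervalIntegrable; fun_prop)
        (by apply Continuous.intervalIntegrable; fun_prop),
    intervalIntegral.integral_add (by apply Continuous.intervalIntegrable; fun_prop)
        (by apply Continuous.intervalIntegrable; fun_prop)]
  simp only [intervalIntegral.integral_const_mul]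

theorem core (R₀ : ℝ) (hR₀ : 0 < R₀)
    (u uR uT aR aT uRR uRT uTT aRR aRT aTT : ℝ → ℝ → ℝ)
    (cu : Continuous (Function.uncurry u))
    (cuR : Continuous (Function.uncurry uR)) (cuT : Continuous (Function.uncurry uT))
    (caR : Continuous (Function.uncurry aR)) (caT : Continuous (Function.uncurry aT))
    (cuRR : Continuous (Function.uncurry uRR)) (cuRT : Continuous (Function.uncurry uRT))
    (cuTT : Continuous (Function.uncurry uTT))
    (caRR : Continuous (Function.uncurry aRR)) (caRT : Continuous (Function.uncurry aRT))
    (caTT : Continuous (Function.uncurry aTT))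
    (du_R : ∀ R θ, HasDerivAt (fun r => u r θ) (uR R θ) R)
    (du_T : ∀ R θ, HasDerivAt (fun t => u R t) (uT R θ) θ)
    (duR_R : ∀ R θ, HasDerivAt (fun r => uR r θ) (uRR R θ) R)
    (duR_T : ∀ R θ, HasDerivAt (fun t => uR R t) (uRT R θ) θ)
    (duT_R : ∀ R θ, HasDerivAt (fun r => uT r θ) (uRT R θ) R)
    (duT_T : ∀ R θ, HasDerivAt (fun t => uT R t) (uTT R θ) θ)
    (daR_R : ∀ R θ, HasDerivAt (fun r => aR r θ) (aRR R θ) R)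
    (daR_T : ∀ R θ, HasDerivAt (fun t => aR R t) (aRT R θ) θ)
    (daT_R : ∀ R θ, HasDerivAt (fun r => aT r θ) (aRT R θ) R)
    (daT_T : ∀ R θ, HasDerivAt (fun t => aT R t) (aTT R θ) θ)
    (pu : ∀ R θ, u R (θ + 2 * π) = u R θ)
    (puR : ∀ R θ, uR R (θ + 2 * π) = uR R θ) (puT : ∀ R θ, uT R (θ + 2 * π) = uT R θ)
    (paR : ∀ R θ, aR R (θ + 2 * π) = aR R θ) (paT : ∀ R θ, aT R (θ + 2 * π) = aT R θ)
    (eqU : ∀ R, R₀ ≤ R → ∀ θ, uRR R θ = uTT R θ - R⁻¹ * uR R θ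
      + (2 * R ^ 2)⁻¹ * (exp (4 * u R θ) * (aR R θ ^ 2 - aT R θ ^ 2)))
    (eqA : ∀ R, R₀ ≤ R → ∀ θ, aRR R θ = aTT R θ + R⁻¹ * aR R θ
      + 4 * (-(uR R θ * aR R θ) + uT R θ * aT R θ))
    (E : ℝ → ℝ)
    (hE : ∀ R, E R = ∫ θ in (0:ℝ)..(2 * π),
      (uR R θ) ^ 2 + (uT R θ) ^ 2
        + exp (4 * u R θ) / (4 * R ^ 2) * ((aR R θ) ^ 2 + (aT R θ) ^ 2)) :
    ∃ K : ℝ, 0 < K ∧ ∀ R, R₀ ≤ R → E R ≤ K / R := by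
  have hpi : 0 < 2 * π := by positivity
  have s_u : ∀ R, Continuous (u R) := fun R => cu.comp (Continuous.prodMk_right R)
  have s_uR : ∀ R, Continuous (uR R) := fun R => cuR.comp (Continuous.prodMk_right R)
  have s_uT : ∀ R, Continuous (uT R) := fun R => cuT.comp (Continuous.prodMk_right R)
  have s_aR : ∀ R, Continuous (aR R) := fun R => caR.comp (Continuous.prodMk_right R)
  have s_aT : ∀ R, Continuous (aT R) := fun R => caT.comp (Continuous.prodMk_right R)
  have s_uRT : ∀ R, Continuous (uRT R) := fun R => cuRT.comp (Continuous.prodMk_right R)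
  have s_uTT : ∀ R, Continuous (uTT R) := fun R => cuTT.comp (Continuous.prodMk_right R)
  have s_aRT : ∀ R, Continuous (aRT R) := fun R => caRT.comp (Continuous.prodMk_right R)
  have s_aTT : ∀ R, Continuous (aTT R) := fun R => caTT.comp (Continuous.prodMk_right R)
  set a : ℝ → ℝ := fun R => ∫ θ in (0:ℝ)..(2 * π), uR R θ ^ 2 with ha
  set b : ℝ → ℝ := fun R => ∫ θ in (0:ℝ)..(2 * π), uT R θ ^ 2 with hb
  set c : ℝ → ℝ := fun R => ∫ θ in (0:ℝ)..(2 * π), exp (4 * u R θ) * aR R θ ^ 2 with hc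
  set d : ℝ → ℝ := fun R => ∫ θ in (0:ℝ)..(2 * π), exp (4 * u R θ) * aT R θ ^ 2 with hd
  set J : ℝ → ℝ := fun R => ∫ θ in (0:ℝ)..(2 * π),
    uR R θ * (exp (4 * u R θ) * (aR R θ ^ 2 - aT R θ ^ 2)) with hJ
  set L : ℝ → ℝ := fun R => ∫ θ in (0:ℝ)..(2 * π),
    u R θ * (exp (4 * u R θ) * (aR R θ ^ 2 - aT R θ ^ 2)) with hL
  set P : ℝ → ℝ := fun R => ∫ θ in (0:ℝ)..(2 * π), (uR R θ ^ 2 + uT R θ ^ 2) with hP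
  set Q : ℝ → ℝ := fun R => ∫ θ in (0:ℝ)..(2 * π),
    exp (4 * u R θ) * (aR R θ ^ 2 + aT R θ ^ 2) with hQ
  set Y : ℝ → ℝ := fun R => ∫ θ in (0:ℝ)..(2 * π), uR R θ with hY
  set V : ℝ → ℝ := fun R => ∫ θ in (0:ℝ)..(2 * π), u R θ * uR R θ with hV
  set m : ℝ → ℝ := fun R => (∫ θ in (0:ℝ)..(2 * π), u R θ) / (2 * π) with hm
  -- splitting
  have ePab : ∀ R, P R = a R + b R := by
    intro R
    exact intervalIntegral.integral_add (by apply Continuous.intervalIntegrable; fun_prop)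
        (by apply Continuous.intervalIntegrable; fun_prop)
  have eQcd : ∀ R, Q R = c R + d R := by
    intro R
    simp only [hQ, mul_add]
    exact intervalIntegral.integral_add (by apply Continuous.intervalIntegrable; fun_prop)
        (by apply Continuous.intervalIntegrable; fun_prop)
  have eEPQ : ∀ R, E R = P R + (4 * R ^ 2)⁻¹ * Q R := by
    intro R
    rw [hE R]
    simp only [hP, hQ]
    rw [intervalIntegral.integral_add (by apply Continuous.intervalIntegrable; fun_prop)
        (by apply Continuous.intervalIntegrable; fun_prop),
      ← intervalIntegral.integral_const_mul]
    congr 2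
    funext θ
    rw [div_eq_mul_inv]; ring
  have na : ∀ R, 0 ≤ a R := fun R => intervalIntegral.integral_nonneg hpi.le fun _ _ => by positivity
  have nb : ∀ R, 0 ≤ b R := fun R => intervalIntegral.integral_nonneg hpi.le fun _ _ => by positivity
  have nc : ∀ R, 0 ≤ c R := fun R => intervalIntegral.integral_nonneg hpi.le fun _ _ => by positivity
  have nd : ∀ R, 0 ≤ d R := fun R => intervalIntegral.integral_nonneg hpi.le fun _ _ => by positivity
  -- derivatives
  have dP : ∀ R, R₀ ≤ R → HasDerivAt P (-2 * R⁻¹ * a R + (R ^ 2)⁻¹ * J R) R := by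
    intro R hR
    have hRne : R ≠ 0 := by linarith
    have h := deriv_int (fun R θ => uR R θ ^ 2 + uT R θ ^ 2)
      (fun R θ => 2 * uR R θ * uRR R θ + 2 * uT R θ * uRT R θ) (by fun_prop) (by fun_prop)
      (fun R θ => by
        have := ((duR_R R θ).pow 2).add ((duT_R R θ).pow 2)
        exact this.congr_deriv (by simp)) R
    convert h using 1
    have z := int_deriv_zero (fun θ => 2 * (uR R θ * uT R θ))
      (fun θ => 2 * (uRT R θ * uT R θ + uR R θ * uTT R θ)) (by fun_prop)
      (fun θ => ((duR_T R θ).mul (duT_T R θ)).const_mul 2) (by simp only [puR, puT])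
    have l := lin4 (fun θ => 2 * (uRT R θ * uT R θ + uR R θ * uTT R θ)) (fun θ => uR R θ ^ 2)
      (fun θ => uR R θ * (exp (4 * u R θ) * (aR R θ ^ 2 - aT R θ ^ 2))) (fun _ => 0) (fun _ => 0)
      (by fun_prop) (by fun_prop) (by fun_prop) (by fun_prop) (by fun_prop)
      (-2 * R⁻¹) ((R ^ 2)⁻¹) 0 0
    rw [z] at l
    refine Eq.trans (Eq.trans ?_ l.symm) ?_
    · simp [ha, hJ]
    · congr 1; funext θ
      simp only [eqU R hR θ]; field_simp; ring
  have dQ : ∀ R, R₀ ≤ R → HasDerivAt Q (2 * R⁻¹ * c R + (-4) * J R) R := by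
    intro R hR
    have hRne : R ≠ 0 := by linarith
    have h := deriv_int (fun R θ => exp (4 * u R θ) * (aR R θ ^ 2 + aT R θ ^ 2))
      (fun R θ => exp (4 * u R θ) * (4 * uR R θ) * (aR R θ ^ 2 + aT R θ ^ 2)
        + exp (4 * u R θ) * (2 * aR R θ * aRR R θ + 2 * aT R θ * aRT R θ))
      (by fun_prop) (by fun_prop)
      (fun R θ => by
        have := (((du_R R θ).const_mul 4).exp).mul (((daR_R R θ).pow 2).add ((daT_R R θ).pow 2))
        exact this.congr_deriv (by simp)) R
    convert h using 1
    have z := int_deriv_zero (fun θ => 2 * (exp (4 * u R θ) * (aR R θ * aT R θ)))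
      (fun θ => 2 * (exp (4 * u R θ) * (4 * uT R θ) * (aR R θ * aT R θ)
        + exp (4 * u R θ) * (aRT R θ * aT R θ + aR R θ * aTT R θ))) (by fun_prop)
      (fun θ => ((((du_T R θ).const_mul 4).exp).mul
        ((daR_T R θ).mul (daT_T R θ))).const_mul 2) (by simp only [pu, paR, paT])
    have l := lin4 (fun θ => 2 * (exp (4 * u R θ) * (4 * uT R θ) * (aR R θ * aT R θ)
        + exp (4 * u R θ) * (aRT R θ * aT R θ + aR R θ * aTT R θ)))
      (fun θ => exp (4 * u R θ) * aR R θ ^ 2)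
      (fun θ => uR R θ * (exp (4 * u R θ) * (aR R θ ^ 2 - aT R θ ^ 2))) (fun _ => 0) (fun _ => 0)
      (by fun_prop) (by fun_prop) (by fun_prop) (by fun_prop) (by fun_prop)
      (2 * R⁻¹) (-4) 0 0
    rw [z] at l
    refine Eq.trans (Eq.trans ?_ l.symm) ?_
    · simp [hc, hJ]
    · congr 1; funext θ
      simp only [eqA R hR θ]; field_simp; ring
  have dY : ∀ R, R₀ ≤ R → HasDerivAt Y
      (-R⁻¹ * Y R + (2 * R ^ 2)⁻¹ * c R + (-(2 * R ^ 2)⁻¹) * d R) R := by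
    intro R hR
    have hRne : R ≠ 0 := by linarith
    have h := deriv_int uR uRR cuR cuRR duR_R R
    convert h using 1
    have z := int_deriv_zero (uT R) (uTT R) (by fun_prop) (duT_T R) (puT R 0)
    have l := lin4 (uTT R) (uR R) (fun θ => exp (4 * u R θ) * aR R θ ^ 2)
      (fun θ => exp (4 * u R θ) * aT R θ ^ 2) (fun _ => 0)
      (by fun_prop) (by fun_prop) (by fun_prop) (by fun_prop) (by fun_prop)
      (-R⁻¹) ((2 * R ^ 2)⁻¹) (-(2 * R ^ 2)⁻¹) 0
    rw [z] at l
    refine Eq.trans (Eq.trans ?_ l.symm) ?_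
    · simp [hY, hc, hd]
    · congr 1; funext θ
      simp only [eqU R hR θ]; field_simp; ring
  have dV : ∀ R, R₀ ≤ R → HasDerivAt V
      (1 * a R + (-1) * b R + (-R⁻¹) * V R + (2 * R ^ 2)⁻¹ * L R) R := by
    intro R hR
    have hRne : R ≠ 0 := by linarith
    have h := deriv_int (fun R θ => u R θ * uR R θ)
      (fun R θ => uR R θ * uR R θ + u R θ * uRR R θ) (by fun_prop) (by fun_prop)
      (fun R θ => (du_R R θ).mul (duR_R R θ)) R
    convert h using 1
    have z := int_deriv_zero (fun θ => u R θ * uT R θ)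
      (fun θ => uT R θ * uT R θ + u R θ * uTT R θ) (by fun_prop)
      (fun θ => (du_T R θ).mul (duT_T R θ)) (by simp only [pu, puT])
    have l := lin4 (fun θ => uT R θ * uT R θ + u R θ * uTT R θ) (fun θ => uR R θ ^ 2)
      (fun θ => uT R θ ^ 2) (fun θ => u R θ * uR R θ)
      (fun θ => u R θ * (exp (4 * u R θ) * (aR R θ ^ 2 - aT R θ ^ 2)))
      (by fun_prop) (by fun_prop) (by fun_prop) (by fun_prop) (by fun_prop)
      1 (-1) (-R⁻¹) ((2 * R ^ 2)⁻¹)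
    rw [z] at l
    refine Eq.trans (Eq.trans ?_ l.symm) ?_
    · simp [ha, hb, hV, hL]
    · congr 1; funext θ
      simp only [eqU R hR θ]; field_simp; ring
  have dm : ∀ R, HasDerivAt m (Y R / (2 * π)) R := by
    intro R
    exact (deriv_int u uR cu cuR du_R R).div_const _
  -- bounds
  have osc : ∀ R θ, θ ∈ Icc 0 (2 * π) → |u R θ - m R| ≤ √(2 * π * b R) := fun R θ hθ =>
    osc_bound (u R) (uT R) (s_uT R) (du_T R) θ hθ
  have hYsq : ∀ R, Y R ^ 2 ≤ 2 * π * a R := fun R => cs_int (uR R) (s_uR R)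
  have hXint : ∀ R, V R - m R * Y R = ∫ θ in (0:ℝ)..(2 * π), (u R θ - m R) * uR R θ := by
    intro R
    simp only [sub_mul]
    rw [intervalIntegral.integral_sub (by apply Continuous.intervalIntegrable; fun_prop)
        (by apply Continuous.intervalIntegrable; fun_prop), intervalIntegral.integral_const_mul]
  have hNint : ∀ R, L R - m R * (c R - d R) = ∫ θ in (0:ℝ)..(2 * π),
      (u R θ - m R) * (exp (4 * u R θ) * (aR R θ ^ 2 - aT R θ ^ 2)) := by
    intro R
    have l := lin4 (fun θ => u R θ * (exp (4 * u R θ) * (aR R θ ^ 2 - aT R θ ^ 2)))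
      (fun θ => exp (4 * u R θ) * aR R θ ^ 2)
      (fun θ => exp (4 * u R θ) * aT R θ ^ 2) (fun _ => 0) (fun _ => 0)
      (by fun_prop) (by fun_prop) (by fun_prop) (by fun_prop) (by fun_prop)
      (-m R) (m R) 0 0
    refine Eq.trans (Eq.trans ?_ l.symm) ?_
    · simp only [hL, hc, hd]; ring
    · congr 1; funext θ
      ring
  have hXb : ∀ R, |V R - m R * Y R| ≤ ((2 * π) ^ 2 * b R + a R) / 2 := by
    intro R
    rw [hXint R]
    have h1 := intervalIntegral.norm_integral_le_of_norm_le
      (f := fun θ => (u R θ - m R) * uR R θ)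
      (g := fun θ => (2 * π * b R + uR R θ ^ 2) / 2) (a := 0) (b := 2 * π) (μ := volume) hpi.le
      (Filter.Eventually.of_forall fun θ hθ => by
        have ho := osc R θ ⟨hθ.1.le, hθ.2⟩
        have h2 : (u R θ - m R) ^ 2 ≤ 2 * π * b R := by
          have := sq_le_sq' (by linarith [abs_nonneg (u R θ - m R), sqrt_nonneg (2 * π * b R)]) ho
          rw [sq_abs, sq_sqrt (mul_nonneg hpi.le (nb R))] at this
          exact this
        rw [norm_eq_abs, abs_le]
        constructor
        · nlinarith [sq_nonneg (u R θ - m R + uR R θ)]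
        · nlinarith [sq_nonneg (u R θ - m R - uR R θ)])
      (by apply Continuous.intervalIntegrable; fun_prop)
    refine le_trans h1 (le_of_eq ?_)
    rw [intervalIntegral.integral_div, intervalIntegral.integral_add (by simp)
      (by apply Continuous.intervalIntegrable; fun_prop)]
    simp only [intervalIntegral.integral_const, ha, smul_eq_mul]
    ring
  have hNb : ∀ R, |L R - m R * (c R - d R)| ≤ √(2 * π * b R) * (c R + d R) := by
    intro R
    rw [hNint R, ← eQcd R]
    have h1 := intervalIntegral.norm_integral_le_of_norm_le
      (f := fun θ => (u R θ - m R) * (exp (4 * u R θ) * (aR R θ ^ 2 - aT R θ ^ 2)))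
      (g := fun θ => √(2 * π * b R) * (exp (4 * u R θ) * (aR R θ ^ 2 + aT R θ ^ 2)))
      (a := 0) (b := 2 * π) (μ := volume) hpi.le
      (Filter.Eventually.of_forall fun θ hθ => by
        have ho := osc R θ ⟨hθ.1.le, hθ.2⟩
        rw [norm_mul, norm_mul, norm_eq_abs, norm_eq_abs, norm_eq_abs, abs_of_pos (exp_pos _)]
        have : |aR R θ ^ 2 - aT R θ ^ 2| ≤ aR R θ ^ 2 + aT R θ ^ 2 := by
          rw [abs_le]
          constructor <;> nlinarith [sq_nonneg (aR R θ), sq_nonneg (aT R θ)]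
        gcongr)
      (by apply Continuous.intervalIntegrable; fun_prop)
    rw [intervalIntegral.integral_const_mul] at h1
    exact h1
  have hbE : ∀ R, a R ≤ E R ∧ b R ≤ E R := by
    intro R
    rw [eEPQ, ePab, eQcd]
    have := na R; have := nb R
    have : 0 ≤ (4 * R ^ 2)⁻¹ * (c R + d R) := by
      have := nc R; have := nd R; positivity
    constructor <;> linarith
  have hpi4 : π < 4 := pi_lt_four
  have hsq : ∀ R, ∀ x, x ≤ E R → √(2 * π * x) ≤ 3 * √(E R) := by
    intro R x hx
    have : 0 ≤ E R := (na R).trans (hbE R).1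
    have h9 : 2 * π * x ≤ 3 ^ 2 * E R := by
      have : π < 3.15 := pi_lt_d2
      nlinarith
    calc √(2 * π * x) ≤ √(3 ^ 2 * E R) := sqrt_le_sqrt h9
      _ = _ := by rw [sqrt_mul (by norm_num), sqrt_sq (by norm_num)]
  refine ode_decay R₀ hR₀ 40 (by norm_num) E (fun R => V R - m R * Y R) Y a
    (fun R => (4 * R ^ 2)⁻¹ * d R) b (fun R => (4 * R ^ 2)⁻¹ * c R)
    (fun R => (2 * R ^ 2)⁻¹ * (L R - m R * (c R - d R)))
    (fun R _ => na R) (fun R _ => mul_nonneg (by positivity) (nd R))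
    (fun R _ => nb R) (fun R _ => mul_nonneg (by positivity) (nc R)) ?_ ?_ ?_ ?_ ?_ ?_ ?_
  · intro R _
    rw [eEPQ, ePab, eQcd]; ring
  · intro R hR
    have hRne : R ≠ 0 := by linarith
    have hi : HasDerivAt (fun r : ℝ => (4 * r ^ 2)⁻¹) (-(4 * (2 * R)) / (4 * R ^ 2) ^ 2) R := by
      have := ((hasDerivAt_pow 2 R).const_mul 4).inv (by positivity)
      exact this.congr_deriv (by simp)
    have h := (dP R hR).add (hi.mul (dQ R hR))
    have : E = fun r => P r + (4 * r ^ 2)⁻¹ * Q r := funext eEPQ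
    rw [this]
    refine HasDerivAt.congr_deriv h ?_
    rw [eQcd]
    field_simp
    ring
  · intro R hR
    have hRne : R ≠ 0 := by linarith
    refine (dY R hR).congr_deriv ?_
    field_simp
    ring
  · intro R hR
    have hRne : R ≠ 0 := by linarith
    have h := (dV R hR).sub ((dm R).mul (dY R hR))
    refine HasDerivAt.congr_deriv h ?_
    field_simp
    ring
  · intro R hR
    have hRp : 0 < R := by linarith
    have h1 := hNb R
    have h2 := hsq R (b R) (hbE R).2
    have h3 : 0 ≤ c R + d R := add_nonneg (nc R) (nd R)
    have h4 : 0 ≤ √(E R) := sqrt_nonneg _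
    rw [abs_mul, abs_of_pos (by positivity : 0 < (2 * R ^ 2)⁻¹)]
    calc (2 * R ^ 2)⁻¹ * |L R - m R * (c R - d R)|
        ≤ (2 * R ^ 2)⁻¹ * ((20 * √(E R)) * (c R + d R)) := by
          gcongr
          refine h1.trans ?_
          gcongr
          linarith
      _ = _ := by field_simp; ring
  · intro R hR
    refine (hXb R).trans ?_
    have := na R; have := nb R
    obtain ⟨h1, h2⟩ := hbE R
    have : (2 * π) ^ 2 ≤ 64 := by nlinarith [pi_pos]
    nlinarith
  · intro R hR
    have h2 := hsq R (a R) (hbE R).1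
    have h4 : 0 ≤ √(E R) := sqrt_nonneg _
    have := abs_le_sqrt (hYsq R)
    linarith

theorem stmt9
    (R₀ : ℝ) (hR₀ : 0 < R₀)
    (U A : ℝ → ℝ → ℝ)
    (hU : ContDiff ℝ (⊤ : ℕ∞) (Function.uncurry U))
    (hA : ContDiff ℝ (⊤ : ℕ∞) (Function.uncurry A))
    (hUper : ∀ R θ, U R (θ + 2 * π) = U R θ)
    (hAper : ∀ R θ, A R (θ + 2 * π) = A R θ)
    (eqU : ∀ R, R₀ ≤ R → ∀ θ : ℝ,
      deriv (fun r => r * pdR U r θ) R - deriv (fun t => R * pdT U R t) θ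
        = exp (4 * U R θ) / (2 * R) * ((pdR A R θ) ^ 2 - (pdT A R θ) ^ 2))
    (eqA : ∀ R, R₀ ≤ R → ∀ θ : ℝ,
      deriv (fun r => r⁻¹ * pdR A r θ) R - deriv (fun t => R⁻¹ * pdT A R t) θ
        = 4 / R * (-(pdR U R θ * pdR A R θ) + pdT U R θ * pdT A R θ))
    (E : ℝ → ℝ)
    (hE : ∀ R, E R = ∫ θ in (0:ℝ)..(2 * π),
      (pdR U R θ) ^ 2 + (pdT U R θ) ^ 2
        + exp (4 * U R θ) / (4 * R ^ 2) * ((pdR A R θ) ^ 2 + (pdT A R θ) ^ 2))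
 :
    ∃ K : ℝ, 0 < K ∧ ∀ R, R₀ ≤ R → E R ≤ K / R := by
  have hUR := contDiff_pdR hU
  have hUT := contDiff_pdT hU
  have hAR := contDiff_pdR hA
  have hAT := contDiff_pdT hA
  refine core R₀ hR₀ U (pdR U) (pdT U) (pdR A) (pdT A) (pdR (pdR U)) (pdR (pdT U)) (pdT (pdT U))
    (pdR (pdR A)) (pdR (pdT A)) (pdT (pdT A)) hU.continuous hUR.continuous hUT.continuous
    hAR.continuous hAT.continuous (contDiff_pdR hUR).continuous (contDiff_pdR hUT).continuous
    (contDiff_pdT hUT).continuous (contDiff_pdR hAR).continuous (contDiff_pdR hAT).continuous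
    (contDiff_pdT hAT).continuous (hasDerivAt_pdR hU) (hasDerivAt_pdT hU) (hasDerivAt_pdR hUR)
    ?_ (hasDerivAt_pdR hUT) (hasDerivAt_pdT hUT) (hasDerivAt_pdR hAR) ?_ (hasDerivAt_pdR hAT)
    (hasDerivAt_pdT hAT) hUper (periodic_pdR hUper) (periodic_pdT hUper) (periodic_pdR hAper)
    (periodic_pdT hAper) ?_ ?_ E hE
  · intro R θ
    rw [pd_comm hU]
    exact hasDerivAt_pdT hUR R θ
  · intro R θ
    rw [pd_comm hA]
    exact hasDerivAt_pdT hAR R θ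
  · intro R hR θ
    have hRne : R ≠ 0 := by linarith
    have h := eqU R hR θ
    have h1 : deriv (fun r => r * pdR U r θ) R = 1 * pdR U R θ + R * pdR (pdR U) R θ :=
      ((hasDerivAt_id R).mul (hasDerivAt_pdR hUR R θ)).deriv
    have h2 : deriv (fun t => R * pdT U R t) θ = R * pdT (pdT U) R θ :=
      ((hasDerivAt_pdT hUT R θ).const_mul R).deriv
    rw [h1, h2] at h
    have h3 : pdR (pdR U) R θ = R⁻¹ * (R * pdR (pdR U) R θ) := by field_simp
    have h4 : R * pdR (pdR U) R θ = R * pdT (pdT U) R θ - pdR U R θ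
      + exp (4 * U R θ) / (2 * R) * ((pdR A R θ) ^ 2 - (pdT A R θ) ^ 2) := by linarith
    rw [h3, h4]
    field_simp
  · intro R hR θ
    have hRne : R ≠ 0 := by linarith
    have h := eqA R hR θ
    have h1 : deriv (fun r => r⁻¹ * pdR A r θ) R
        = -(R ^ 2)⁻¹ * pdR A R θ + R⁻¹ * pdR (pdR A) R θ :=
      ((hasDerivAt_inv hRne).mul (hasDerivAt_pdR hAR R θ)).deriv
    have h2 : deriv (fun t => R⁻¹ * pdT A R t) θ = R⁻¹ * pdT (pdT A) R θ :=
      ((hasDerivAt_pdT hAT R θ).const_mul R⁻¹).deriv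
    rw [h1, h2] at h
    have h3 : pdR (pdR A) R θ = R * (R⁻¹ * pdR (pdR A) R θ) := by field_simp
    have h4 : R⁻¹ * pdR (pdR A) R θ = R⁻¹ * pdT (pdT A) R θ + (R ^ 2)⁻¹ * pdR A R θ
      + 4 / R * (-(pdR U R θ * pdR A R θ) + pdT U R θ * pdT A R θ) := by linarith
    rw [h3, h4]
    field_simp
end

section
/- For every (R,θ) ∈ [R₀,∞) × ℝ one has ∂_R η(R,θ) − ∂_R U(R,θ) + 1/(4R) ≥ 0 and |∂_θ η(R,θ) − ∂_θ U(R,θ)| ≤ ∂_R η(R,θ) − ∂_R U(R,θ) + 1/(4R). -/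
open Real MeasureTheory Set

theorem stmt11
    (R₀ : ℝ) (hR₀ : 0 < R₀)
    (U A : ℝ → ℝ → ℝ)
    (hU : ContDiff ℝ (⊤ : ℕ∞) (Function.uncurry U))
    (hA : ContDiff ℝ (⊤ : ℕ∞) (Function.uncurry A))
    (hUper : ∀ R θ, U R (θ + 2 * π) = U R θ)
    (hAper : ∀ R θ, A R (θ + 2 * π) = A R θ)
    (η : ℝ → ℝ → ℝ)
    (hη : ContDiff ℝ (⊤ : ℕ∞) (Function.uncurry η))
    (hηper : ∀ R θ, η R (θ + 2 * π) = η R θ)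
    (conηR : ∀ R, R₀ ≤ R → ∀ θ : ℝ,
      pdR η R θ = R * ((pdR U R θ) ^ 2 + (pdT U R θ) ^ 2
        + exp (4 * U R θ) / (4 * R ^ 2) * ((pdR A R θ) ^ 2 + (pdT A R θ) ^ 2)))
    (conηT : ∀ R, R₀ ≤ R → ∀ θ : ℝ,
      pdT η R θ = R * (2 * pdR U R θ * pdT U R θ
        + exp (4 * U R θ) / (2 * R ^ 2) * (pdR A R θ * pdT A R θ)))
 :
    ∀ R, R₀ ≤ R → ∀ θ : ℝ,
      0 ≤ pdR η R θ - pdR U R θ + 1 / (4 * R)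
      ∧ |pdT η R θ - pdT U R θ| ≤ pdR η R θ - pdR U R θ + 1 / (4 * R) := by
  intro R hR θ
  have hpos : 0 < R := lt_of_lt_of_le hR₀ hR
  rw [conηR R hR θ, conηT R hR θ]
  generalize pdR U R θ = a
  generalize pdT U R θ = b
  generalize pdR A R θ = c
  generalize pdT A R θ = d
  have hE : 0 < exp (4 * U R θ) := exp_pos _
  generalize exp (4 * U R θ) = E at hE
  have h1 : 0 ≤ R * (a + b - 1 / (2 * R)) ^ 2 + E / (4 * R) * (c + d) ^ 2 := by positivity
  have h2 : 0 ≤ R * (a - b - 1 / (2 * R)) ^ 2 + E / (4 * R) * (c - d) ^ 2 := by positivity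
  have e1 : R * (a + b - 1 / (2 * R)) ^ 2 + E / (4 * R) * (c + d) ^ 2
      = (R * (a ^ 2 + b ^ 2 + E / (4 * R ^ 2) * (c ^ 2 + d ^ 2)) - a + 1 / (4 * R))
        + (R * (2 * a * b + E / (2 * R ^ 2) * (c * d)) - b) := by
    field_simp
    ring
  have e2 : R * (a - b - 1 / (2 * R)) ^ 2 + E / (4 * R) * (c - d) ^ 2
      = (R * (a ^ 2 + b ^ 2 + E / (4 * R ^ 2) * (c ^ 2 + d ^ 2)) - a + 1 / (4 * R))
        - (R * (2 * a * b + E / (2 * R ^ 2) * (c * d)) - b) := by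
    field_simp
    ring
  rw [e1] at h1
  rw [e2] at h2
  refine ⟨by linarith, abs_le.2 ⟨by linarith, by linarith⟩⟩
end

section
/- There exists a constant C > 0, depending only on the solution, such that |U(R,θ)| ≤ C R^{1/2} for all R ≥ R₀ and all θ ∈ ℝ. -/
open Real MeasureTheory Set

/-! ### Integrals over a period -/

/-- integral over `[0, 2π]` -/
noncomputable def II (f : ℝ → ℝ) : ℝ := ∫ x in (0 : ℝ)..(2 * π), f x

theorem two_pi_nonneg' : (0 : ℝ) ≤ 2 * π := by positivity

theorem II_add {f g : ℝ → ℝ} (hf : Continuous f) (hg : Continuous g) :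
    II (fun x => f x + g x) = II f + II g :=
  intervalIntegral.integral_add (hf.intervalIntegrable _ _) (hg.intervalIntegrable _ _)

theorem II_sub {f g : ℝ → ℝ} (hf : Continuous f) (hg : Continuous g) :
    II (fun x => f x - g x) = II f - II g :=
  intervalIntegral.integral_sub (hf.intervalIntegrable _ _) (hg.intervalIntegrable _ _)

theorem II_mul (c : ℝ) (f : ℝ → ℝ) : II (fun x => c * f x) = c * II f :=
  intervalIntegral.integral_const_mul c f

theorem II_const (c : ℝ) : II (fun _ => c) = 2 * π * c := by
  simp [II]

theorem II_mono {f g : ℝ → ℝ} (hf : Continuous f) (hg : Continuous g)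
    (h : ∀ x ∈ Icc (0 : ℝ) (2 * π), f x ≤ g x) : II f ≤ II g :=
  intervalIntegral.integral_mono_on two_pi_nonneg' (hf.intervalIntegrable _ _)
    (hg.intervalIntegrable _ _) h

theorem II_nonneg {f : ℝ → ℝ} (h : ∀ x ∈ Icc (0 : ℝ) (2 * π), 0 ≤ f x) : 0 ≤ II f :=
  intervalIntegral.integral_nonneg two_pi_nonneg' h

theorem II_abs (f : ℝ → ℝ) : |II f| ≤ II (fun x => |f x|) :=
  intervalIntegral.abs_integral_le_integral_abs two_pi_nonneg'

theorem II_deriv {f f' : ℝ → ℝ} (hf' : Continuous f') (h : ∀ x, HasDerivAt f (f' x) x)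
    (hp : f (2 * π) = f 0) : II f' = 0 := by
  unfold II
  rw [intervalIntegral.integral_eq_sub_of_hasDerivAt (fun x _ => h x)
    (hf'.intervalIntegrable _ _), hp, sub_self]

theorem II_hasDerivAt {F F' : ℝ → ℝ → ℝ} (hF : Continuous (fun z : ℝ × ℝ => F z.1 z.2))
    (hF' : Continuous (fun z : ℝ × ℝ => F' z.1 z.2))
    (h : ∀ t x, HasDerivAt (fun s => F s x) (F' t x) t) (t : ℝ) :
    HasDerivAt (fun s => II (F s)) (II (F' t)) t := by
  have hK : IsCompact (Icc (t - 1) (t + 1) ×ˢ Icc (0 : ℝ) (2 * π)) :=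
    isCompact_Icc.prod isCompact_Icc
  obtain ⟨C, hC⟩ := hK.exists_bound_of_continuousOn hF'.continuousOn
  have c1 : ∀ s, Continuous (F s) := fun s => by
    have : Continuous (fun x => F s x) := by fun_prop
    exact this
  have c2 : ∀ s, Continuous (F' s) := fun s => by
    have : Continuous (fun x => F' s x) := by fun_prop
    exact this
  refine (intervalIntegral.hasDerivAt_integral_of_dominated_loc_of_deriv_le
    (s := Icc (t - 1) (t + 1)) (bound := fun _ => C)
    (Icc_mem_nhds (by linarith) (by linarith)) ?_ ?_ ?_ ?_ ?_ ?_).2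
  · exact Filter.Eventually.of_forall fun s => (c1 s).aestronglyMeasurable
  · exact (c1 t).intervalIntegrable _ _
  · exact (c2 t).aestronglyMeasurable
  · refine Filter.Eventually.of_forall fun x hx s hs => ?_
    rw [uIoc_of_le two_pi_nonneg'] at hx
    exact hC (s, x) ⟨hs, hx.1.le, hx.2⟩
  · exact intervalIntegrable_const
  · exact Filter.Eventually.of_forall fun x _ s _ => h s x

theorem II_cs {f : ℝ → ℝ} (hf : Continuous f) : (II f) ^ 2 ≤ 2 * π * II (fun x => f x ^ 2) := by
  have hπ := Real.pi_pos
  set m := II f / (2 * π) with hm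
  have h0 : 0 ≤ II (fun x => (f x - m) ^ 2) := II_nonneg fun x _ => sq_nonneg _
  have h1 : II (fun x => (f x - m) ^ 2) = II (fun x => f x ^ 2) - 2 * m * II f + 2 * π * m ^ 2 := by
    rw [← II_const, ← II_mul, ← II_sub (by fun_prop) (by fun_prop),
      ← II_add (by fun_prop) (by fun_prop)]
    congr 1
    funext x
    ring
  have h2 : II f = 2 * π * m := by rw [hm]; field_simp
  rw [h1, h2] at h0
  rw [h2]
  nlinarith

theorem II_osc {f f' : ℝ → ℝ} (hf' : Continuous f') (h : ∀ x, HasDerivAt f (f' x) x)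
    {x y : ℝ} (hx : x ∈ Icc (0 : ℝ) (2 * π)) (hy : y ∈ Icc (0 : ℝ) (2 * π)) :
    |f x - f y| ≤ II (fun z => |f' z|) := by
  have key : ∀ x ∈ Icc (0 : ℝ) (2 * π), ∀ y ∈ Icc (0 : ℝ) (2 * π), y ≤ x →
      |f x - f y| ≤ II (fun z => |f' z|) := by
    intro x hx y hy hxy
    rw [← intervalIntegral.integral_eq_sub_of_hasDerivAt (fun x _ => h x)
      (hf'.intervalIntegrable _ _)]
    refine (intervalIntegral.abs_integral_le_integral_abs hxy).trans ?_
    exact intervalIntegral.integral_mono_interval hy.1 hxy hx.2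
      (Filter.Eventually.of_forall fun _ => abs_nonneg _)
      (hf'.abs.intervalIntegrable _ _)
  rcases le_total y x with h1 | h1
  · exact key x hx y hy h1
  · rw [abs_sub_comm]; exact key y hy x hx h1

/-- mean over a period -/
noncomputable def mean (f : ℝ → ℝ) : ℝ := (2 * π)⁻¹ * II f

theorem II_eq_mean (f : ℝ → ℝ) : II f = 2 * π * mean f := by
  have := Real.pi_pos
  unfold mean; field_simp

theorem mean_dev {f : ℝ → ℝ} (hf : Continuous f) {x D : ℝ}
    (h : ∀ y ∈ Icc (0 : ℝ) (2 * π), |f x - f y| ≤ D) : |f x - mean f| ≤ D := by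
  have hπ := Real.pi_pos
  have e : 2 * π * (f x - mean f) = II (fun y => f x - f y) := by
    rw [II_sub (by fun_prop) hf, II_const, II_eq_mean]; ring
  have h1 : |2 * π * (f x - mean f)| ≤ 2 * π * D := by
    rw [e, ← II_const]
    exact (II_abs _).trans (II_mono (by fun_prop) (by fun_prop) h)
  rw [abs_mul, abs_of_pos (by positivity)] at h1
  exact le_of_mul_le_mul_left h1 (by positivity)

theorem mean_sq_le {f : ℝ → ℝ} (hf : Continuous f) :
    2 * π * mean f ^ 2 ≤ II (fun x => f x ^ 2) := by
  have hπ := Real.pi_pos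
  have := II_cs hf
  rw [II_eq_mean] at this
  have h2 : (2 * π) * (2 * π * mean f ^ 2) ≤ (2 * π) * II (fun x => f x ^ 2) := by
    calc _ = (2 * π * mean f) ^ 2 := by ring
      _ ≤ _ := this
  exact le_of_mul_le_mul_left h2 (by positivity)

/-- lower bound for the weighted cross term -/
theorem cross_lower {p q : ℝ → ℝ} (hp : Continuous p) (hq : Continuous q) {δ : ℝ}
    (hδ : ∀ x ∈ Icc (0 : ℝ) (2 * π), |p x - p 0| ≤ δ) :
    -((exp (2 * δ) - 1) * exp (2 * δ) * II (fun x => exp (2 * p x) * q x ^ 2))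
      ≤ II (fun x => exp (2 * p x) * q x * mean q) := by
  have hπ := Real.pi_pos
  have hδ0 : 0 ≤ δ := by
    have := hδ 0 ⟨le_refl _, by positivity⟩
    simpa using this
  set W := exp (2 * p 0) with hW
  have hW0 : 0 < W := exp_pos _
  set η := exp (2 * δ) - 1 with hη
  have hη0 : 0 ≤ η := by
    have := Real.add_one_le_exp (2 * δ)
    linarith
  set b := mean q with hb
  have hw : ∀ x ∈ Icc (0 : ℝ) (2 * π), |exp (2 * p x) - W| ≤ η * W := by
    intro x hx
    have h1 := abs_le.1 (hδ x hx)
    have e1 : exp (2 * p x) = exp (2 * (p x - p 0)) * W := by rw [hW, ← exp_add]; ring_nf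
    have e2 : exp (2 * (p x - p 0)) ≤ exp (2 * δ) := exp_le_exp.2 (by linarith)
    have e3 : exp (-(2 * δ)) ≤ exp (2 * (p x - p 0)) := exp_le_exp.2 (by linarith)
    have e4 : 1 - exp (-(2 * δ)) ≤ η := by
      have h5 : exp (-(2 * δ)) * exp (2 * δ) = 1 := by rw [← exp_add]; simp
      have h6 := exp_pos (-(2 * δ))
      have h7 := exp_pos (2 * δ)
      nlinarith [sq_nonneg (exp (2 * δ) - 1), sq_nonneg (exp (-(2 * δ)) - 1),
        sq_nonneg (exp (2 * δ) - exp (-(2 * δ)))]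
    rw [e1, abs_le]
    constructor <;> nlinarith
  have hWle : ∀ x ∈ Icc (0 : ℝ) (2 * π), W ≤ exp (2 * δ) * exp (2 * p x) := by
    intro x hx
    have h1 := abs_le.1 (hδ x hx)
    rw [hW, ← exp_add]
    exact exp_le_exp.2 (by linarith)
  have s1 : II (fun x => W * b * q x - (η * W / 2 * q x ^ 2 + η * W / 2 * b ^ 2))
      ≤ II (fun x => exp (2 * p x) * q x * b) := by
    refine II_mono (by fun_prop) (by fun_prop) fun x hx => ?_
    have h1 := abs_le.1 (hw x hx)
    have h2 : |(exp (2 * p x) - W) * (q x * b)| ≤ η * W * ((q x ^ 2 + b ^ 2) / 2) := by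
      rw [abs_mul]
      refine mul_le_mul (hw x hx) ?_ (abs_nonneg _) (by positivity)
      rw [abs_le]
      constructor <;> nlinarith [sq_nonneg (q x + b), sq_nonneg (q x - b)]
    have h3 := (abs_le.1 h2).1
    nlinarith
  have s2 : II (fun x => W * b * q x - (η * W / 2 * q x ^ 2 + η * W / 2 * b ^ 2))
      = W * b * II q - (η * W / 2 * II (fun x => q x ^ 2) + 2 * π * (η * W / 2 * b ^ 2)) := by
    rw [II_sub (by fun_prop) (by fun_prop), II_add (by fun_prop) (by fun_prop), II_mul, II_mul,
      II_const]
  have s3 : 2 * π * b ^ 2 ≤ II (fun x => q x ^ 2) := mean_sq_le hq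
  have s4 : W * II (fun x => q x ^ 2) ≤ exp (2 * δ) * II (fun x => exp (2 * p x) * q x ^ 2) := by
    rw [← II_mul, ← II_mul]
    refine II_mono (by fun_prop) (by fun_prop) fun x hx => ?_
    have := mul_le_mul_of_nonneg_right (hWle x hx) (sq_nonneg (q x))
    linarith
  rw [s2, II_eq_mean q, ← hb] at s1
  have s5 : 0 ≤ W * b * (2 * π * b) := by
    have : W * b * (2 * π * b) = W * (2 * π) * b ^ 2 := by ring
    rw [this]; positivity
  have s6 : η * (W * II (fun x => q x ^ 2)) ≤
    η * (exp (2 * δ) * II (fun x => exp (2 * p x) * q x ^ 2)) := mul_le_mul_of_nonneg_left s4 hη0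
  have s7 : η * W / 2 * (2 * π * b ^ 2) ≤ η * W / 2 * II (fun x => q x ^ 2) :=
    mul_le_mul_of_nonneg_left s3 (by positivity)
  linarith

/-- bound for the correction terms -/
theorem corr_bound {p a f f' : ℝ → ℝ} (hp : Continuous p) (ha : Continuous a)
    (hf : Continuous f) (hf' : Continuous f') (h : ∀ x, HasDerivAt f (f' x) x) {δ s : ℝ}
    (hs : 0 < s)
    (hδ : ∀ x ∈ Icc (0 : ℝ) (2 * π), ∀ y ∈ Icc (0 : ℝ) (2 * π), |p x - p y| ≤ δ) :
    |II (fun x => exp (2 * p x) * a x * (f x - mean f))| ≤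
      exp δ * π * (s⁻¹ * II (fun x => exp (2 * p x) * a x ^ 2)
        + s * II (fun x => exp (2 * p x) * f' x ^ 2)) := by
  have hπ := Real.pi_pos
  set S := II (fun x => exp (p x) * |f' x|) with hS
  set T := II (fun x => exp (p x) * |a x|) with hT
  have hS0 : 0 ≤ S := II_nonneg fun x _ => by positivity
  have hT0 : 0 ≤ T := II_nonneg fun x _ => by positivity
  have e2 : ∀ x, exp (2 * p x) = exp (p x) ^ 2 := fun x => by
    rw [← exp_nat_mul]; norm_num
  have h1 : ∀ x ∈ Icc (0 : ℝ) (2 * π), exp (p x) * |f x - mean f| ≤ exp δ * S := by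
    intro x hx
    have k1 : |f x - mean f| ≤ II (fun z => |f' z|) :=
      mean_dev hf fun y hy => II_osc hf' h hx hy
    calc exp (p x) * |f x - mean f| ≤ exp (p x) * II (fun z => |f' z|) := by gcongr
      _ ≤ exp δ * S := by
        rw [hS, ← II_mul, ← II_mul]
        refine II_mono (by fun_prop) (by fun_prop) fun y hy => ?_
        rw [← mul_assoc, ← exp_add]
        gcongr
        have := (abs_le.1 (hδ x hx y hy)).2
        linarith
  have h2 : |II (fun x => exp (2 * p x) * a x * (f x - mean f))| ≤ exp δ * S * T := by
    refine (II_abs _).trans ?_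
    rw [hT, ← II_mul]
    refine II_mono (by fun_prop) (by fun_prop) fun x hx => ?_
    have : |exp (2 * p x) * a x * (f x - mean f)|
        = (exp (p x) * |f x - mean f|) * (exp (p x) * |a x|) := by
      rw [abs_mul, abs_mul, abs_of_pos (exp_pos _), e2]; ring
    rw [this]
    exact mul_le_mul_of_nonneg_right (h1 x hx) (by positivity)
  have h3 : S ^ 2 ≤ 2 * π * II (fun x => exp (2 * p x) * f' x ^ 2) := by
    have := II_cs (f := fun x => exp (p x) * |f' x|) (by fun_prop)
    simpa only [mul_pow, sq_abs, ← e2] using this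
  have h4 : T ^ 2 ≤ 2 * π * II (fun x => exp (2 * p x) * a x ^ 2) := by
    have := II_cs (f := fun x => exp (p x) * |a x|) (by fun_prop)
    simpa only [mul_pow, sq_abs, ← e2] using this
  have h5 : S * T ≤ (s * S ^ 2 + s⁻¹ * T ^ 2) / 2 := by
    have : 0 ≤ s⁻¹ * (s * S - T) ^ 2 := by positivity
    have e : s⁻¹ * (s * S - T) ^ 2 = s * S ^ 2 - 2 * (S * T) + s⁻¹ * T ^ 2 := by
      field_simp
      ring
    linarith
  have h6 := mul_le_mul_of_nonneg_left h3 hs.le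
  have h7 := mul_le_mul_of_nonneg_left h4 (inv_pos.2 hs).le
  calc _ ≤ exp δ * S * T := h2
    _ = exp δ * (S * T) := by ring
    _ ≤ exp δ * (π * (s⁻¹ * II (fun x => exp (2 * p x) * a x ^ 2)
        + s * II (fun x => exp (2 * p x) * f' x ^ 2))) := by
      refine mul_le_mul_of_nonneg_left ?_ (exp_pos _).le
      linarith
    _ = _ := by ring

/-! ### ODE lemma -/

theorem anti_of_deriv {f f' : ℝ → ℝ} {t₀ : ℝ} (h : ∀ t, t₀ ≤ t → HasDerivAt f (f' t) t)
    (h' : ∀ t, t₀ ≤ t → f' t ≤ 0) : AntitoneOn f (Ici t₀) := by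
  refine antitoneOn_of_deriv_nonpos (convex_Ici _)
    (fun t ht => (h t ht).continuousAt.continuousWithinAt) (fun t ht => ?_) (fun t ht => ?_)
  · rw [interior_Ici] at ht
    exact (h t (le_of_lt ht)).differentiableAt.differentiableWithinAt
  · rw [interior_Ici] at ht
    rw [(h t (le_of_lt ht)).deriv]
    exact h' t (le_of_lt ht)

theorem ode_decay_s12 {E F F' : ℝ → ℝ} {t₀ M c b ρ B : ℝ} (ht₀ : 0 ≤ t₀) (hb : 0 < b) (hb1 : b ≤ 1)
    (hc : 0 < c) (hρ : 0 ≤ ρ) (hB : 0 ≤ B)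
    (hE : ∀ t, t₀ ≤ t → 0 ≤ E t) (hM : ∀ t, t₀ ≤ t → E t ≤ M)
    (hF : ∀ t, t₀ ≤ t → HasDerivAt F (F' t) t)
    (hF' : ∀ t, t₀ ≤ t → F' t ≤ -(c * E t) + ρ * exp (-(b * t)) * E t)
    (hFE : ∀ t, t₀ ≤ t → |F t - E t| ≤ B * exp (-t) * E t) :
    ∃ C, 0 ≤ C ∧ ∀ t, t₀ ≤ t → E t ≤ C * exp (-(c * t)) := by
  obtain ⟨t₁, ht₁, hBt⟩ : ∃ t₁, t₀ ≤ t₁ ∧ ∀ t, t₁ ≤ t → B * exp (-t) ≤ 1 / 2 := by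
    refine ⟨max t₀ (2 * B), le_max_left _ _, fun t ht => ?_⟩
    have h1 : 2 * B ≤ t := (le_max_right _ _).trans ht
    have h2 : t + 1 ≤ exp t := add_one_le_exp t
    rw [exp_neg, ← div_eq_mul_inv, div_le_iff₀ (exp_pos t)]
    linarith
  have hM0 : 0 ≤ M := (hE t₀ le_rfl).trans (hM t₀ le_rfl)
  set r := 2 * (ρ + c * B) with hr
  have hr0 : 0 ≤ r := by positivity
  -- the weighted quantity is nonincreasing
  have hEF : ∀ t, t₁ ≤ t → E t ≤ 2 * F t := by
    intro t ht
    have h1 := (abs_le.1 (hFE t (ht₁.trans ht))).1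
    have h2 := mul_le_mul_of_nonneg_right (hBt t ht) (hE t (ht₁.trans ht))
    linarith
  have hd : ∀ t, t₁ ≤ t → F' t ≤ -(c * F t) + r * exp (-(b * t)) * F t := by
    intro t ht
    have h0 := hE t (ht₁.trans ht)
    have ht0 : 0 ≤ t := by linarith
    have h1 := (abs_le.1 (hFE t (ht₁.trans ht))).2
    have h2 : exp (-t) ≤ exp (-(b * t)) := exp_le_exp.2 (by nlinarith)
    have h3 : B * exp (-t) * E t ≤ B * exp (-(b * t)) * E t := by gcongr
    have h4 := mul_le_mul_of_nonneg_left (h1.trans h3) hc.le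
    have h5 : (ρ + c * B) * exp (-(b * t)) * E t ≤ (ρ + c * B) * exp (-(b * t)) * (2 * F t) :=
      mul_le_mul_of_nonneg_left (hEF t ht) (by positivity)
    have h6 := hF' t (ht₁.trans ht)
    rw [hr]
    nlinarith
  set g := fun t => c * t + r / b * exp (-(b * t)) with hg
  have hgd : ∀ t, HasDerivAt g (c - r * exp (-(b * t))) t := by
    intro t
    have h1 : HasDerivAt (fun t => exp (-(b * t))) (exp (-(b * t)) * (-(b * 1))) t :=
      (((hasDerivAt_id t).const_mul b).neg).exp
    have h2 := ((hasDerivAt_id t).const_mul c).add (h1.const_mul (r / b))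
    have e : c - r * exp (-(b * t)) = c * 1 + r / b * (exp (-(b * t)) * (-(b * 1))) := by
      field_simp
      ring
    rw [e]
    exact h2
  have hanti : AntitoneOn (fun t => exp (g t) * F t) (Ici t₁) := by
    refine anti_of_deriv (f' := fun t => exp (g t) * (c - r * exp (-(b * t))) * F t
      + exp (g t) * F' t) (fun t ht => (hgd t).exp.mul (hF t (ht₁.trans ht))) (fun t ht => ?_)
    have h1 := hd t ht
    have h2 := exp_pos (g t)
    have : exp (g t) * (c - r * exp (-(b * t))) * F t + exp (g t) * F' t
      = exp (g t) * ((c - r * exp (-(b * t))) * F t + F' t) := by ring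
    rw [this]
    exact mul_nonpos_of_nonneg_of_nonpos h2.le (by linarith)
  have hF1 : 0 ≤ F t₁ := by
    have := hEF t₁ le_rfl
    have := hE t₁ ht₁
    linarith
  refine ⟨2 * (exp (g t₁) * F t₁) + M * exp (c * t₁), by positivity, fun t ht => ?_⟩
  rcases le_total t₁ t with h | h
  · have h1 := hanti (mem_Ici.2 le_rfl) (mem_Ici.2 h) h
    have h2 : exp (c * t) ≤ exp (g t) := exp_le_exp.2 (by
      rw [hg]; simp only
      have : 0 ≤ r / b * exp (-(b * t)) := by positivity
      linarith)
    have hFt : 0 ≤ F t := by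
      have := hEF t h
      have := hE t ht
      linarith
    have h3 : exp (c * t) * F t ≤ exp (g t₁) * F t₁ :=
      (mul_le_mul_of_nonneg_right h2 hFt).trans h1
    have h4 : F t ≤ exp (g t₁) * F t₁ * exp (-(c * t)) := by
      rw [exp_neg, ← div_eq_mul_inv, le_div_iff₀ (exp_pos _)]
      linarith
    have h5 : 0 ≤ M * exp (c * t₁) * exp (-(c * t)) := by positivity
    have := hEF t h
    linarith
  · have h1 : 1 ≤ exp (c * t₁) * exp (-(c * t)) := by
      rw [← exp_add]
      exact one_le_exp (by nlinarith)
    have h2 : 0 ≤ 2 * (exp (g t₁) * F t₁) * exp (-(c * t)) := by positivity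
    have := hM t ht
    nlinarith

/-! ### The wave map system in logarithmic time -/

/-- a `C²` function, together with its derivatives, periodic in `x` -/
structure CTwo (P Pt Px Ptt Ptx Pxx : ℝ → ℝ → ℝ) : Prop where
  c : Continuous (fun z : ℝ × ℝ => P z.1 z.2)
  ct : Continuous (fun z : ℝ × ℝ => Pt z.1 z.2)
  cx : Continuous (fun z : ℝ × ℝ => Px z.1 z.2)
  ctt : Continuous (fun z : ℝ × ℝ => Ptt z.1 z.2)
  ctx : Continuous (fun z : ℝ × ℝ => Ptx z.1 z.2)
  cxx : Continuous (fun z : ℝ × ℝ => Pxx z.1 z.2)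
  dt : ∀ t x, HasDerivAt (fun s => P s x) (Pt t x) t
  dx : ∀ t x, HasDerivAt (fun y => P t y) (Px t x) x
  dtt : ∀ t x, HasDerivAt (fun s => Pt s x) (Ptt t x) t
  dxt : ∀ t x, HasDerivAt (fun s => Px s x) (Ptx t x) t
  dtx : ∀ t x, HasDerivAt (fun y => Pt t y) (Ptx t x) x
  dxx : ∀ t x, HasDerivAt (fun y => Px t y) (Pxx t x) x
  per : ∀ t, P t (2 * π) = P t 0
  pert : ∀ t, Pt t (2 * π) = Pt t 0
  perx : ∀ t, Px t (2 * π) = Px t 0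

theorem mean_hasDerivAt {P Pt Px Ptt Ptx Pxx : ℝ → ℝ → ℝ} (hP : CTwo P Pt Px Ptt Ptx Pxx) (t : ℝ) :
    HasDerivAt (fun s => mean (P s)) (mean (Pt t)) t :=
  (II_hasDerivAt hP.c hP.ct hP.dt t).const_mul _

theorem mean_cont {P Pt Px Ptt Ptx Pxx : ℝ → ℝ → ℝ} (hP : CTwo P Pt Px Ptt Ptx Pxx) :
    Continuous (fun s => mean (P s)) :=
  continuous_iff_continuousAt.2 fun t => (mean_hasDerivAt hP t).continuousAt

theorem meant_cont {P Pt Px Ptt Ptx Pxx : ℝ → ℝ → ℝ} (hP : CTwo P Pt Px Ptt Ptx Pxx) :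
    Continuous (fun s => mean (Pt s)) :=
  continuous_iff_continuousAt.2 fun t =>
    ((II_hasDerivAt hP.ct hP.ctt hP.dtt t).const_mul _).continuousAt

/-- decaying exponential -/
noncomputable def etwo (t : ℝ) : ℝ := exp (-(2 * t))

theorem etwo_pos (t : ℝ) : 0 < etwo t := exp_pos _

theorem etwo_cont : Continuous etwo := by unfold etwo; fun_prop

theorem etwo_deriv (t : ℝ) : HasDerivAt etwo (-2 * etwo t) t := by
  have h1 : HasDerivAt (fun t : ℝ => exp (-(2 * t))) (exp (-(2 * t)) * (-(2 * 1))) t :=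
    (((hasDerivAt_id t).const_mul 2).neg).exp
  have e : -2 * etwo t = exp (-(2 * t)) * (-(2 * 1)) := by unfold etwo; ring
  rw [e]
  exact h1

/-- kinetic part of `P` -/
noncomputable def kinP (Pt : ℝ → ℝ → ℝ) (t : ℝ) : ℝ := etwo t * II (fun x => Pt t x ^ 2)
/-- kinetic part of `Q` -/
noncomputable def kinQ (P Qt : ℝ → ℝ → ℝ) (t : ℝ) : ℝ :=
  etwo t * II (fun x => exp (2 * P t x) * Qt t x ^ 2)
/-- potential part of `P` -/
noncomputable def potP (Px : ℝ → ℝ → ℝ) (t : ℝ) : ℝ := II (fun x => Px t x ^ 2)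
/-- potential part of `Q` -/
noncomputable def potQ (P Qx : ℝ → ℝ → ℝ) (t : ℝ) : ℝ :=
  II (fun x => exp (2 * P t x) * Qx t x ^ 2)
/-- corrector for `P` -/
noncomputable def corP (P Pt : ℝ → ℝ → ℝ) (t : ℝ) : ℝ :=
  etwo t * II (fun x => Pt t x * (P t x - mean (P t)))
/-- corrector for `Q` -/
noncomputable def corQ (P Q Qt : ℝ → ℝ → ℝ) (t : ℝ) : ℝ :=
  etwo t * II (fun x => exp (2 * P t x) * Qt t x * (Q t x - mean (Q t)))

theorem II_eq_of {a b z : ℝ → ℝ} (hz : II z = 0) (hb : Continuous b) (hzc : Continuous z)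
    (h : ∀ x, a x = b x + z x) : II a = II b := by
  have : a = fun x => b x + z x := funext h
  rw [this, II_add hb hzc, hz, add_zero]

section sys

variable {P Pt Px Ptt Ptx Pxx Q Qt Qx Qtt Qtx Qxx : ℝ → ℝ → ℝ} {t₀ : ℝ}

theorem kinP_nonneg (t : ℝ) : 0 ≤ kinP Pt t :=
  mul_nonneg (etwo_pos t).le (II_nonneg fun x _ => by positivity)
theorem kinQ_nonneg (t : ℝ) : 0 ≤ kinQ P Qt t :=
  mul_nonneg (etwo_pos t).le (II_nonneg fun x _ => by positivity)
theorem potP_nonneg (t : ℝ) : 0 ≤ potP Px t := II_nonneg fun x _ => by positivity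
theorem potQ_nonneg (t : ℝ) : 0 ≤ potQ P Qx t := II_nonneg fun x _ => by positivity

theorem expP_dt (hP : CTwo P Pt Px Ptt Ptx Pxx) (t x : ℝ) :
    HasDerivAt (fun s => exp (2 * P s x)) (exp (2 * P t x) * (2 * Pt t x)) t :=
  ((hP.dt t x).const_mul 2).exp

theorem expP_dx (hP : CTwo P Pt Px Ptt Ptx Pxx) (t x : ℝ) :
    HasDerivAt (fun y => exp (2 * P t y)) (exp (2 * P t x) * (2 * Px t x)) x :=
  ((hP.dx t x).const_mul 2).exp

theorem energy_deriv (hP : CTwo P Pt Px Ptt Ptx Pxx) (hQ : CTwo Q Qt Qx Qtt Qtx Qxx)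
    (e1 : ∀ t, t₀ ≤ t → ∀ x, etwo t * Ptt t x = Pxx t x
      + exp (2 * P t x) * (etwo t * Qt t x ^ 2 - Qx t x ^ 2))
    (e2 : ∀ t, t₀ ≤ t → ∀ x, etwo t * Qtt t x = Qxx t x
      - 2 * (etwo t * Pt t x * Qt t x - Px t x * Qx t x)) (t : ℝ) (ht : t₀ ≤ t) :
    HasDerivAt (fun s => kinP Pt s + kinQ P Qt s + potP Px s + potQ P Qx s)
      (-2 * (kinP Pt t + kinQ P Qt t)) t := by
  obtain ⟨c, ct, cx, ctt, ctx, cxx, dt, dx, dtt, dxt, dtx, dxx, per, pert, perx⟩ := id hP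
  obtain ⟨c', ct', cx', ctt', ctx', cxx', dt', dx', dtt', dxt', dtx', dxx', per', pert', perx'⟩ :=
    id hQ
  have hem := etwo_cont
  have hd := II_hasDerivAt
    (F := fun t x => etwo t * (Pt t x ^ 2 + exp (2 * P t x) * Qt t x ^ 2)
      + (Px t x ^ 2 + exp (2 * P t x) * Qx t x ^ 2))
    (F' := fun t x => -2 * etwo t * (Pt t x ^ 2 + exp (2 * P t x) * Qt t x ^ 2)
      + etwo t * (2 * Pt t x * Ptt t x + (exp (2 * P t x) * (2 * Pt t x) * Qt t x ^ 2
        + exp (2 * P t x) * (2 * Qt t x * Qtt t x)))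
      + (2 * Px t x * Ptx t x + (exp (2 * P t x) * (2 * Pt t x) * Qx t x ^ 2
        + exp (2 * P t x) * (2 * Qx t x * Qtx t x))))
    (by fun_prop) (by fun_prop)
    (fun t x => by
      have := ((etwo_deriv t).mul (((dtt t x).pow 2).add ((expP_dt hP t x).mul ((dtt' t x).pow 2)))).add
        (((dxt t x).pow 2).add ((expP_dt hP t x).mul ((dxt' t x).pow 2)))
      refine this.congr_deriv ?_
      simp only [Pi.pow_apply, Pi.add_apply, Pi.mul_apply]
      push_cast
      ring) t
  have hz := II_deriv
    (f := fun x => 2 * (Pt t x * Px t x) + 2 * (exp (2 * P t x) * (Qt t x * Qx t x)))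
    (f' := fun x => 2 * (Ptx t x * Px t x + Pt t x * Pxx t x)
      + 2 * (exp (2 * P t x) * (2 * Px t x) * (Qt t x * Qx t x)
        + exp (2 * P t x) * (Qtx t x * Qx t x + Qt t x * Qxx t x)))
    (by fun_prop)
    (fun x => (((dtx t x).mul (dxx t x)).const_mul 2).add
      (((expP_dx hP t x).mul ((dtx' t x).mul (dxx' t x))).const_mul 2))
    (by simp only [per, pert, perx, pert', perx'])
  refine (hd.congr_deriv ?_).congr_of_eventuallyEq (Filter.Eventually.of_forall fun s => ?_)
  · rw [kinP, kinQ, ← mul_add, ← II_add (by fun_prop) (by fun_prop), ← mul_assoc, ← II_mul]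
    refine II_eq_of hz (by fun_prop) (by fun_prop) fun x => ?_
    linear_combination 2 * Pt t x * e1 t ht x + 2 * exp (2 * P t x) * Qt t x * e2 t ht x
  · simp only
    rw [kinP, kinQ, potP, potQ, ← mul_add, ← II_add (by fun_prop) (by fun_prop), ← II_mul, add_assoc,
      ← II_add (by fun_prop) (by fun_prop), ← II_add (by fun_prop) (by fun_prop)]

theorem corP_deriv (hP : CTwo P Pt Px Ptt Ptx Pxx) (hQ : CTwo Q Qt Qx Qtt Qtx Qxx)
    (e1 : ∀ t, t₀ ≤ t → ∀ x, etwo t * Ptt t x = Pxx t x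
      + exp (2 * P t x) * (etwo t * Qt t x ^ 2 - Qx t x ^ 2)) (t : ℝ) (ht : t₀ ≤ t) :
    HasDerivAt (corP P Pt)
      (-2 * corP P Pt t + kinP Pt t - potP Px t - etwo t * mean (Pt t) * II (Pt t)
        + II (fun x => exp (2 * P t x) * (etwo t * Qt t x ^ 2 - Qx t x ^ 2)
          * (P t x - mean (P t)))) t := by
  obtain ⟨c, ct, cx, ctt, ctx, cxx, dt, dx, dtt, dxt, dtx, dxx, per, pert, perx⟩ := id hP
  obtain ⟨c', ct', cx', ctt', ctx', cxx', dt', dx', dtt', dxt', dtx', dxx', per', pert', perx'⟩ :=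
    id hQ
  have hem := etwo_cont
  obtain ⟨m, hm0⟩ : ∃ m : ℝ → ℝ, ∀ s, m s = mean (P s) := ⟨_, fun _ => rfl⟩
  obtain ⟨m', hm0'⟩ : ∃ m : ℝ → ℝ, ∀ s, m s = mean (Pt s) := ⟨_, fun _ => rfl⟩
  have hm : Continuous m := by rw [funext hm0]; exact mean_cont hP
  have hm' : Continuous m' := by rw [funext hm0']; exact meant_cont hP
  have hmd : ∀ s, HasDerivAt m (m' s) s := by
    intro s; rw [funext hm0, hm0']; exact mean_hasDerivAt hP s
  have hd := II_hasDerivAt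
    (F := fun t x => etwo t * (Pt t x * (P t x - m t)))
    (F' := fun t x => -2 * etwo t * (Pt t x * (P t x - m t))
      + etwo t * (Ptt t x * (P t x - m t) + Pt t x * (Pt t x - m' t)))
    (by fun_prop) (by fun_prop)
    (fun t x => (etwo_deriv t).mul ((dtt t x).mul ((dt t x).sub (hmd t)))) t
  have hz := II_deriv
    (f := fun x => Px t x * (P t x - m t))
    (f' := fun x => Pxx t x * (P t x - m t) + Px t x * Px t x)
    (by fun_prop)
    (fun x => (dxx t x).mul ((dx t x).sub_const (m t)))
    (by simp only [per, perx])
  have i1 : Continuous (fun x => Pt t x) := by fun_prop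
  refine (hd.congr_deriv ?_).congr_of_eventuallyEq (Filter.Eventually.of_forall fun s => ?_)
  · simp only [corP, kinP, potP, ← hm0, ← hm0']
    rw [← mul_assoc, ← II_mul, ← II_mul (etwo t), ← II_mul _ (Pt t),
      ← II_add (by fun_prop) (by fun_prop), ← II_sub (by fun_prop) (by fun_prop),
      ← II_sub (by fun_prop) (by fun_prop), ← II_add (by fun_prop) (by fun_prop)]
    refine II_eq_of hz (by fun_prop) (by fun_prop) fun x => ?_
    linear_combination (P t x - m t) * e1 t ht x
  · simp only [corP, ← hm0]
    rw [← II_mul]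

theorem corQ_deriv (hP : CTwo P Pt Px Ptt Ptx Pxx) (hQ : CTwo Q Qt Qx Qtt Qtx Qxx)
    (e2 : ∀ t, t₀ ≤ t → ∀ x, etwo t * Qtt t x = Qxx t x
      - 2 * (etwo t * Pt t x * Qt t x - Px t x * Qx t x)) (t : ℝ) (ht : t₀ ≤ t) :
    HasDerivAt (corQ P Q Qt)
      (-2 * corQ P Q Qt t + kinQ P Qt t - potQ P Qx t
        - etwo t * II (fun x => exp (2 * P t x) * Qt t x * mean (Qt t))) t := by
  obtain ⟨c, ct, cx, ctt, ctx, cxx, dt, dx, dtt, dxt, dtx, dxx, per, pert, perx⟩ := id hP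
  obtain ⟨c', ct', cx', ctt', ctx', cxx', dt', dx', dtt', dxt', dtx', dxx', per', pert', perx'⟩ :=
    id hQ
  have hem := etwo_cont
  obtain ⟨m, hm0⟩ : ∃ m : ℝ → ℝ, ∀ s, m s = mean (Q s) := ⟨_, fun _ => rfl⟩
  obtain ⟨m', hm0'⟩ : ∃ m : ℝ → ℝ, ∀ s, m s = mean (Qt s) := ⟨_, fun _ => rfl⟩
  have hm : Continuous m := by rw [funext hm0]; exact mean_cont hQ
  have hm' : Continuous m' := by rw [funext hm0']; exact meant_cont hQ
  have hmd : ∀ s, HasDerivAt m (m' s) s := by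
    intro s; rw [funext hm0, hm0']; exact mean_hasDerivAt hQ s
  have hd := II_hasDerivAt
    (F := fun t x => etwo t * (exp (2 * P t x) * Qt t x * (Q t x - m t)))
    (F' := fun t x => -2 * etwo t * (exp (2 * P t x) * Qt t x * (Q t x - m t))
      + etwo t * ((exp (2 * P t x) * (2 * Pt t x) * Qt t x + exp (2 * P t x) * Qtt t x)
          * (Q t x - m t)
        + exp (2 * P t x) * Qt t x * (Qt t x - m' t)))
    (by fun_prop) (by fun_prop)
    (fun t x => (etwo_deriv t).mul (((expP_dt hP t x).mul (dtt' t x)).mul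
      ((dt' t x).sub (hmd t)))) t
  have hz := II_deriv
    (f := fun x => exp (2 * P t x) * Qx t x * (Q t x - m t))
    (f' := fun x => (exp (2 * P t x) * (2 * Px t x) * Qx t x + exp (2 * P t x) * Qxx t x)
      * (Q t x - m t) + exp (2 * P t x) * Qx t x * Qx t x)
    (by fun_prop)
    (fun x => ((expP_dx hP t x).mul (dxx' t x)).mul ((dx' t x).sub_const (m t)))
    (by simp only [per, per', perx'])
  refine (hd.congr_deriv ?_).congr_of_eventuallyEq (Filter.Eventually.of_forall fun s => ?_)
  · simp only [corQ, kinQ, potQ, ← hm0, ← hm0']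
    rw [← mul_assoc, ← II_mul, ← II_mul (etwo t), ← II_mul (etwo t),
      ← II_add (by fun_prop) (by fun_prop), ← II_sub (by fun_prop) (by fun_prop),
      ← II_sub (by fun_prop) (by fun_prop)]
    refine II_eq_of hz (by fun_prop) (by fun_prop) fun x => ?_
    linear_combination exp (2 * P t x) * (Q t x - m t) * e2 t ht x
  · simp only [corQ, ← hm0]
    rw [← II_mul]

/-- oscillation bound for `P` -/
theorem osc_le (hP : CTwo P Pt Px Ptt Ptx Pxx) (t : ℝ) {x y : ℝ}
    (hx : x ∈ Icc (0 : ℝ) (2 * π)) (hy : y ∈ Icc (0 : ℝ) (2 * π)) :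
    |P t x - P t y| ≤ √(2 * π * potP Px t) := by
  have i1 := hP.cx
  have h1 : Continuous (Px t) := by
    have : Continuous (fun x => Px t x) := by fun_prop
    exact this
  refine (II_osc h1 (hP.dx t) hx hy).trans ?_
  refine Real.le_sqrt_of_sq_le ?_
  have := II_cs h1.abs
  simpa only [sq_abs, potP] using this

theorem corP_bound (hP : CTwo P Pt Px Ptt Ptx Pxx) (t : ℝ) :
    |corP P Pt t| ≤ π * exp (-t) * (kinP Pt t + potP Px t) := by
  obtain ⟨c, ct, cx, ctt, ctx, cxx, dt, dx, dtt, dxt, dtx, dxx, per, pert, perx⟩ := id hP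
  have h := corr_bound (p := fun _ => 0) (a := fun x => Pt t x) (f := fun x => P t x)
    (f' := fun x => Px t x) (δ := 0) (s := exp t) (by fun_prop) (by fun_prop) (by fun_prop)
    (by fun_prop) (dx t) (exp_pos t) (by simp)
  simp only [mul_zero, exp_zero, one_mul] at h
  rw [corP, kinP, potP, abs_mul, abs_of_pos (etwo_pos t)]
  have hem : etwo t = exp (-t) * exp (-t) := by rw [etwo, ← exp_add]; ring_nf
  have hs : exp (-t) * exp t = 1 := by rw [← exp_add]; simp
  calc _ ≤ etwo t * _ := mul_le_mul_of_nonneg_left h (etwo_pos t).le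
    _ = _ := by
      rw [hem, ← exp_neg]
      linear_combination π * exp (-t) * II (fun x => Px t x ^ 2) * hs

theorem corQ_bound (hP : CTwo P Pt Px Ptt Ptx Pxx) (hQ : CTwo Q Qt Qx Qtt Qtx Qxx) (t : ℝ) :
    |corQ P Q Qt t| ≤ exp (√(2 * π * potP Px t)) * π * exp (-t) * (kinQ P Qt t + potQ P Qx t) := by
  obtain ⟨c, ct, cx, ctt, ctx, cxx, dt, dx, dtt, dxt, dtx, dxx, per, pert, perx⟩ := id hP
  obtain ⟨c', ct', cx', ctt', ctx', cxx', dt', dx', dtt', dxt', dtx', dxx', per', pert', perx'⟩ :=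
    id hQ
  have h := corr_bound (p := fun x => P t x) (a := fun x => Qt t x) (f := fun x => Q t x)
    (f' := fun x => Qx t x) (δ := √(2 * π * potP Px t)) (s := exp t) (by fun_prop) (by fun_prop)
    (by fun_prop) (by fun_prop) (dx' t) (exp_pos t) (fun x hx y hy => osc_le hP t hx hy)
  rw [corQ, kinQ, potQ, abs_mul, abs_of_pos (etwo_pos t)]
  have hem : etwo t = exp (-t) * exp (-t) := by rw [etwo, ← exp_add]; ring_nf
  have hs : exp (-t) * exp t = 1 := by rw [← exp_add]; simp
  calc _ ≤ etwo t * _ := mul_le_mul_of_nonneg_left h (etwo_pos t).le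
    _ = _ := by
      rw [hem, ← exp_neg]
      linear_combination exp (√(2 * π * potP Px t)) * π * exp (-t) *
        II (fun x => exp (2 * P t x) * Qx t x ^ 2) * hs

end sys

section sys2

variable {P Pt Px Ptt Ptx Pxx Q Qt Qx Qtt Qtx Qxx : ℝ → ℝ → ℝ} {t₀ : ℝ}

theorem corP_rhs_le (hP : CTwo P Pt Px Ptt Ptx Pxx) (hQ : CTwo Q Qt Qx Qtt Qtx Qxx) (t : ℝ) :
    -2 * corP P Pt t + kinP Pt t - potP Px t - etwo t * mean (Pt t) * II (Pt t)
        + II (fun x => exp (2 * P t x) * (etwo t * Qt t x ^ 2 - Qx t x ^ 2)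
          * (P t x - mean (P t))) ≤
    -2 * corP P Pt t + kinP Pt t - potP Px t
      + √(2 * π * potP Px t) * (kinQ P Qt t + potQ P Qx t) := by
  obtain ⟨c, ct, cx, ctt, ctx, cxx, dt, dx, dtt, dxt, dtx, dxx, per, pert, perx⟩ := id hP
  obtain ⟨c', ct', cx', ctt', ctx', cxx', dt', dx', dtt', dxt', dtx', dxx', per', pert', perx'⟩ :=
    id hQ
  have hπ := Real.pi_pos
  have he := etwo_pos t
  have h1 : 0 ≤ etwo t * mean (Pt t) * II (Pt t) := by
    rw [II_eq_mean]
    have : etwo t * mean (Pt t) * (2 * π * mean (Pt t)) = etwo t * (2 * π) * mean (Pt t) ^ 2 := by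
      ring
    rw [this]; positivity
  have h2 : II (fun x => exp (2 * P t x) * (etwo t * Qt t x ^ 2 - Qx t x ^ 2)
          * (P t x - mean (P t))) ≤ √(2 * π * potP Px t) * (kinQ P Qt t + potQ P Qx t) := by
    rw [kinQ, potQ, ← II_mul, ← II_add (by fun_prop) (by fun_prop), ← II_mul]
    refine II_mono (by fun_prop) (by fun_prop) fun x hx => ?_
    have h3 : |P t x - mean (P t)| ≤ √(2 * π * potP Px t) := by
      refine mean_dev ?_ fun y hy => osc_le hP t hx hy
      have : Continuous (fun x => P t x) := by fun_prop
      exact this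
    refine (le_abs_self _).trans ?_
    rw [abs_mul, mul_comm]
    refine mul_le_mul h3 ?_ (abs_nonneg _) (Real.sqrt_nonneg _)
    rw [abs_mul, abs_of_pos (exp_pos _)]
    have h4 : |etwo t * Qt t x ^ 2 - Qx t x ^ 2| ≤ etwo t * Qt t x ^ 2 + Qx t x ^ 2 := by
      have : 0 ≤ etwo t * Qt t x ^ 2 := by positivity
      rw [abs_le]
      constructor <;> nlinarith [sq_nonneg (Qx t x)]
    have := mul_le_mul_of_nonneg_left h4 (exp_pos (2 * P t x)).le
    linarith
  linarith

theorem corQ_rhs_le (hP : CTwo P Pt Px Ptt Ptx Pxx) (hQ : CTwo Q Qt Qx Qtt Qtx Qxx) (t : ℝ) :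
    -2 * corQ P Q Qt t + kinQ P Qt t - potQ P Qx t
        - etwo t * II (fun x => exp (2 * P t x) * Qt t x * mean (Qt t)) ≤
    -2 * corQ P Q Qt t + kinQ P Qt t - potQ P Qx t
      + (exp (2 * √(2 * π * potP Px t)) - 1) * exp (2 * √(2 * π * potP Px t)) * kinQ P Qt t := by
  obtain ⟨c, ct, cx, ctt, ctx, cxx, dt, dx, dtt, dxt, dtx, dxx, per, pert, perx⟩ := id hP
  obtain ⟨c', ct', cx', ctt', ctx', cxx', dt', dx', dtt', dxt', dtx', dxx', per', pert', perx'⟩ :=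
    id hQ
  have h := cross_lower (p := fun x => P t x) (q := fun x => Qt t x) (by fun_prop) (by fun_prop)
    (δ := √(2 * π * potP Px t))
    (fun x hx => osc_le hP t hx ⟨le_refl _, two_pi_nonneg'⟩)
  have h2 := mul_le_mul_of_nonneg_left h (etwo_pos t).le
  rw [kinQ]
  linarith

set_option maxHeartbeats 2000000 in
theorem core_s12 (hP : CTwo P Pt Px Ptt Ptx Pxx) (hQ : CTwo Q Qt Qx Qtt Qtx Qxx) (ht₀ : 0 ≤ t₀)
    (e1 : ∀ t, t₀ ≤ t → ∀ x, etwo t * Ptt t x = Pxx t x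
      + exp (2 * P t x) * (etwo t * Qt t x ^ 2 - Qx t x ^ 2))
    (e2 : ∀ t, t₀ ≤ t → ∀ x, etwo t * Qtt t x = Qxx t x
      - 2 * (etwo t * Pt t x * Qt t x - Px t x * Qx t x)) :
    ∃ C, 0 ≤ C ∧ ∀ t, t₀ ≤ t → ∀ x ∈ Icc (0 : ℝ) (2 * π), |P t x| ≤ C * exp (t / 2) := by
  have hπ := Real.pi_pos
  obtain ⟨kP, hkP⟩ : ∃ f, f = kinP Pt := ⟨_, rfl⟩
  obtain ⟨kQ, hkQ⟩ : ∃ f, f = kinQ P Qt := ⟨_, rfl⟩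
  obtain ⟨vP, hvP⟩ : ∃ f, f = potP Px := ⟨_, rfl⟩
  obtain ⟨vQ, hvQ⟩ : ∃ f, f = potQ P Qx := ⟨_, rfl⟩
  obtain ⟨gP, hgP⟩ : ∃ f, f = corP P Pt := ⟨_, rfl⟩
  obtain ⟨gQ, hgQ⟩ : ∃ f, f = corQ P Q Qt := ⟨_, rfl⟩
  have nkP : ∀ t, 0 ≤ kP t := by rw [hkP]; exact kinP_nonneg
  have nkQ : ∀ t, 0 ≤ kQ t := by rw [hkQ]; exact kinQ_nonneg
  have nvP : ∀ t, 0 ≤ vP t := by rw [hvP]; exact potP_nonneg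
  have nvQ : ∀ t, 0 ≤ vQ t := by rw [hvQ]; exact potQ_nonneg
  have dE : ∀ t, t₀ ≤ t → HasDerivAt (fun s => kP s + kQ s + vP s + vQ s)
      (-2 * (kP t + kQ t)) t := by
    rw [hkP, hkQ, hvP, hvQ]; exact energy_deriv hP hQ e1 e2
  obtain ⟨gP', dgP, dgP'⟩ : ∃ g' : ℝ → ℝ, (∀ t, t₀ ≤ t → HasDerivAt gP (g' t) t) ∧
      ∀ t, g' t ≤ -2 * gP t + kP t - vP t + √(2 * π * vP t) * (kQ t + vQ t) := by
    rw [hkP, hkQ, hvP, hvQ, hgP]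
    exact ⟨_, corP_deriv hP hQ e1, corP_rhs_le hP hQ⟩
  obtain ⟨gQ', dgQ, dgQ'⟩ : ∃ g' : ℝ → ℝ, (∀ t, t₀ ≤ t → HasDerivAt gQ (g' t) t) ∧
      ∀ t, g' t ≤ -2 * gQ t + kQ t - vQ t
        + (exp (2 * √(2 * π * vP t)) - 1) * exp (2 * √(2 * π * vP t)) * kQ t := by
    rw [hkQ, hvP, hvQ, hgQ]
    exact ⟨_, corQ_deriv hP hQ e2, corQ_rhs_le hP hQ⟩
  have bgP : ∀ t, |gP t| ≤ π * exp (-t) * (kP t + vP t) := by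
    rw [hgP, hkP, hvP]; exact corP_bound hP
  have bgQ : ∀ t, |gQ t| ≤ exp (√(2 * π * vP t)) * π * exp (-t) * (kQ t + vQ t) := by
    rw [hgQ, hkQ, hvP, hvQ]; exact corQ_bound hP hQ
  have osc : ∀ t, ∀ x ∈ Icc (0 : ℝ) (2 * π), |P t x - mean (P t)| ≤ √(2 * π * vP t) := by
    intro t x hx
    rw [hvP]
    refine mean_dev ?_ fun y hy => osc_le hP t hx hy
    have := hP.c
    have : Continuous (fun x => P t x) := by fun_prop
    exact this
  obtain ⟨E, hE⟩ : ∃ E : ℝ → ℝ, E = fun s => kP s + kQ s + vP s + vQ s := ⟨_, rfl⟩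
  have hEt : ∀ t, E t = kP t + kQ t + vP t + vQ t := fun t => by rw [hE]
  rw [← hE] at dE
  have nE : ∀ t, 0 ≤ E t := fun t => by
    rw [hEt]; linarith [nkP t, nkQ t, nvP t, nvQ t]
  have aE : AntitoneOn E (Ici t₀) := anti_of_deriv dE fun t _ => by linarith [nkP t, nkQ t]
  obtain ⟨M, hM⟩ : ∃ M, M = E t₀ := ⟨_, rfl⟩
  have bE : ∀ t, t₀ ≤ t → E t ≤ M := fun t ht => by
    rw [hM]; exact aE (mem_Ici.2 le_rfl) (mem_Ici.2 ht) ht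
  obtain ⟨D, hD⟩ : ∃ D, D = √(2 * π * M) := ⟨_, rfl⟩
  have hD0 : 0 ≤ D := by rw [hD]; exact Real.sqrt_nonneg _
  obtain ⟨δ, hδ⟩ : ∃ δ : ℝ → ℝ, δ = fun t => √(2 * π * vP t) := ⟨_, rfl⟩
  have hδt : ∀ t, √(2 * π * vP t) = δ t := fun t => by rw [hδ]
  have nδ : ∀ t, 0 ≤ δ t := fun t => by rw [hδ]; exact Real.sqrt_nonneg _
  have δE : ∀ t, δ t ≤ √(2 * π * E t) := fun t => by
    rw [← hδt]
    refine Real.sqrt_le_sqrt (mul_le_mul_of_nonneg_left ?_ (by positivity))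
    rw [hEt]; linarith [nkP t, nkQ t, nvP t, nvQ t]
  have δD : ∀ t, t₀ ≤ t → δ t ≤ D := fun t ht => by
    refine (δE t).trans ?_
    rw [hD]
    exact Real.sqrt_le_sqrt (mul_le_mul_of_nonneg_left (bE t ht) (by positivity))
  simp only [hδt] at dgP' dgQ' bgP bgQ osc
  have bgP2 : ∀ t, |gP t| ≤ π * exp (-t) * E t := fun t => by
    refine (bgP t).trans (mul_le_mul_of_nonneg_left ?_ (by positivity))
    rw [hEt]; linarith [nkP t, nkQ t, nvP t, nvQ t]
  have bgQ2 : ∀ t, t₀ ≤ t → |gQ t| ≤ exp D * π * exp (-t) * E t := fun t ht => by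
    refine (bgQ t).trans ?_
    have h1 : exp (δ t) ≤ exp D := exp_le_exp.2 (δD t ht)
    refine mul_le_mul (by gcongr) ?_ (by linarith [nkQ t, nvQ t]) (by positivity)
    rw [hEt]; linarith [nkP t, nkQ t, nvP t, nvQ t]
  have ηle : ∀ t, t₀ ≤ t →
      (exp (2 * δ t) - 1) * exp (2 * δ t) ≤ 2 * δ t * exp (4 * D) := fun t ht => by
    have h1 : exp (2 * δ t) ≤ exp (2 * D) := exp_le_exp.2 (by linarith [δD t ht])
    have h2 : exp (2 * δ t) - 1 ≤ 2 * δ t * exp (2 * δ t) := by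
      have h3 := Real.add_one_le_exp (-(2 * δ t))
      have h4 : exp (-(2 * δ t)) * exp (2 * δ t) = 1 := by rw [← exp_add]; simp
      have h5 := mul_le_mul_of_nonneg_right h3 (exp_pos (2 * δ t)).le
      linarith
    have h6 : exp (4 * D) = exp (2 * D) * exp (2 * D) := by rw [← exp_add]; ring_nf
    calc (exp (2 * δ t) - 1) * exp (2 * δ t) ≤ (2 * δ t * exp (2 * δ t)) * exp (2 * δ t) := by
          gcongr
      _ ≤ (2 * δ t * exp (2 * D)) * exp (2 * D) := by
          have := nδ t
          gcongr
      _ = _ := by rw [h6]; ring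
  -- first stage
  obtain ⟨c, hc, hc1, C, hC, hdec⟩ : ∃ c, 0 < c ∧ c ≤ 1 ∧ ∃ C, 0 ≤ C ∧
      ∀ t, t₀ ≤ t → E t ≤ C * exp (-(c * t)) := by
    obtain ⟨N, hN⟩ : ∃ N, N = 2 * D * exp (4 * D) := ⟨_, rfl⟩
    have hN0 : 0 ≤ N := by rw [hN]; positivity
    obtain ⟨C1, hC1⟩ : ∃ C1, C1 = 1 + (1 + D) * (1 + N) + D := ⟨_, rfl⟩
    have hC11 : 1 ≤ C1 := by
      have : 0 ≤ (1 + D) * (1 + N) := by positivity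
      linarith
    obtain ⟨ε, hε⟩ : ∃ ε, ε = C1⁻¹ := ⟨_, rfl⟩
    have hε0 : 0 < ε := by rw [hε]; positivity
    have hε1 : ε ≤ 1 := by rw [hε]; exact inv_le_one_of_one_le₀ hC11
    have hεC : ε * C1 = 1 := by rw [hε]; exact inv_mul_cancel₀ (by positivity)
    obtain ⟨B, hB⟩ : ∃ B, B = π + (1 + D) * (exp D * π) := ⟨_, rfl⟩
    have hB0 : 0 ≤ B := by rw [hB]; positivity
    have hL : ∀ t, t₀ ≤ t → |gP t + (1 + D) * gQ t| ≤ B * exp (-t) * E t := fun t ht => by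
      refine (abs_add_le _ _).trans ?_
      rw [abs_mul, abs_of_nonneg (by positivity : 0 ≤ 1 + D)]
      have h1 := mul_le_mul_of_nonneg_left (bgQ2 t ht) (by positivity : 0 ≤ 1 + D)
      have h2 := bgP2 t
      rw [hB]
      linarith
    refine ⟨ε, hε0, hε1, ?_⟩
    refine ode_decay_s12 (E := E) (F := fun t => E t + ε * (gP t + (1 + D) * gQ t))
      (F' := fun t => -2 * (kP t + kQ t) + ε * (gP' t + (1 + D) * gQ' t)) (M := M) (b := 1)
      (ρ := 2 * B) (B := B) ht₀ one_pos le_rfl hε0 (by positivity) hB0 (fun t _ => nE t) bE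
      (fun t ht => (dE t ht).add (((dgP t ht).add ((dgQ t ht).const_mul (1 + D))).const_mul ε))
      (fun t ht => ?_) (fun t ht => ?_)
    · have h1 := dgP' t
      have h2 := dgQ' t
      have h3 : δ t * (kQ t + vQ t) ≤ D * (kQ t + vQ t) :=
        mul_le_mul_of_nonneg_right (δD t ht) (by linarith [nkQ t, nvQ t])
      have h4 : (exp (2 * δ t) - 1) * exp (2 * δ t) * kQ t ≤ N * kQ t := by
        refine mul_le_mul_of_nonneg_right ((ηle t ht).trans ?_) (nkQ t)
        rw [hN]
        have := δD t ht
        gcongr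
      have h5 := mul_le_mul_of_nonneg_left (h2.trans (add_le_add_right h4 _))
        (by positivity : 0 ≤ 1 + D)
      have h6 := (abs_le.1 (hL t ht)).1
      have h7 : gP' t + (1 + D) * gQ' t ≤ C1 * (kP t + kQ t) - (vP t + vQ t)
          + 2 * (B * exp (-t) * E t) := by
        have a1 : 0 ≤ (C1 - 1) * kP t := mul_nonneg (by linarith) (nkP t)
        have a2 : C1 * kQ t = kQ t + (1 + D) * (1 + N) * kQ t + D * kQ t := by rw [hC1]; ring
        have a3 := nkQ t
        nlinarith
      have h8 := mul_le_mul_of_nonneg_left h7 hε0.le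
      have h9 : 0 ≤ B * exp (-t) * E t := by have := nE t; positivity
      have h10 : ε * (2 * (B * exp (-t) * E t)) ≤ 2 * (B * exp (-t) * E t) := by nlinarith
      have h11 : ε * (C1 * (kP t + kQ t)) = kP t + kQ t := by rw [← mul_assoc, hεC, one_mul]
      have h12 : ε * (kP t + kQ t) ≤ kP t + kQ t := by nlinarith [nkP t, nkQ t]
      rw [one_mul]
      have h13 := hEt t
      have h14 : ε * E t = ε * (kP t + kQ t) + ε * (vP t + vQ t) := by rw [h13]; ring
      nlinarith
    · have h1 := hL t ht
      have : E t + ε * (gP t + (1 + D) * gQ t) - E t = ε * (gP t + (1 + D) * gQ t) := by ring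
      rw [this, abs_mul, abs_of_pos hε0]
      have := abs_nonneg (gP t + (1 + D) * gQ t)
      nlinarith
  -- second stage
  obtain ⟨C', hC', hdec'⟩ : ∃ C, 0 ≤ C ∧ ∀ t, t₀ ≤ t → E t ≤ C * exp (-(1 * t)) := by
    obtain ⟨B, hB⟩ : ∃ B, B = π + exp D * π := ⟨_, rfl⟩
    have hB0 : 0 ≤ B := by rw [hB]; positivity
    have hL : ∀ t, t₀ ≤ t → |gP t + gQ t| ≤ B * exp (-t) * E t := fun t ht => by
      refine (abs_add_le _ _).trans ?_
      have h1 := bgQ2 t ht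
      have h2 := bgP2 t
      rw [hB]
      linarith
    obtain ⟨S, hS⟩ : ∃ S, S = √(2 * π * C) := ⟨_, rfl⟩
    have hS0 : 0 ≤ S := by rw [hS]; exact Real.sqrt_nonneg _
    have δS : ∀ t, t₀ ≤ t → δ t ≤ S * exp (-(c / 2 * t)) := fun t ht => by
      refine (δE t).trans ?_
      refine Real.sqrt_le_iff.2 ⟨by positivity, ?_⟩
      have h1 : S ^ 2 = 2 * π * C := by rw [hS]; exact Real.sq_sqrt (by positivity)
      have h2 : exp (-(c / 2 * t)) ^ 2 = exp (-(c * t)) := by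
        rw [← exp_nat_mul]; congr 1; push_cast; ring
      rw [mul_pow, h1, h2]
      have := mul_le_mul_of_nonneg_left (hdec t ht) (by positivity : 0 ≤ 2 * π)
      linarith
    refine ode_decay_s12 (E := E) (F := fun t => E t + (gP t + gQ t))
      (F' := fun t => -2 * (kP t + kQ t) + (gP' t + gQ' t)) (M := M) (b := c / 2)
      (ρ := S * (1 + 2 * exp (4 * D)) + 2 * B) (B := B) ht₀ (by positivity) (by linarith) one_pos
      (by positivity) hB0 (fun t _ => nE t) bE
      (fun t ht => (dE t ht).add ((dgP t ht).add (dgQ t ht)))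
      (fun t ht => ?_) (fun t ht => ?_)
    · have h1 := dgP' t
      have h2 := dgQ' t
      have hkQE : kQ t ≤ E t := by rw [hEt]; linarith [nkP t, nkQ t, nvP t, nvQ t]
      have hkvE : kQ t + vQ t ≤ E t := by rw [hEt]; linarith [nkP t, nkQ t, nvP t, nvQ t]
      have hX := exp_pos (-(c / 2 * t))
      have h3 : δ t * (kQ t + vQ t) ≤ S * exp (-(c / 2 * t)) * E t :=
        mul_le_mul (δS t ht) hkvE (by linarith [nkQ t, nvQ t]) (by positivity)
      have h4 : (exp (2 * δ t) - 1) * exp (2 * δ t) * kQ t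
          ≤ 2 * (S * exp (-(c / 2 * t))) * exp (4 * D) * E t := by
        refine mul_le_mul ((ηle t ht).trans ?_) hkQE (nkQ t) (by positivity)
        have := δS t ht
        gcongr
      have h6 := (abs_le.1 (hL t ht)).1
      have h7 : exp (-t) ≤ exp (-(c / 2 * t)) := exp_le_exp.2 (by nlinarith)
      have h8 : B * exp (-t) * E t ≤ B * exp (-(c / 2 * t)) * E t := by
        have := nE t
        gcongr
      have h13 := hEt t
      rw [one_mul]
      linarith
    · have h1 := hL t ht
      have : E t + (gP t + gQ t) - E t = gP t + gQ t := by ring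
      rw [this]
      exact h1
  -- conclusion
  have hmd : ∀ t, t₀ ≤ t → |mean (Pt t)| ≤ √C' * exp (t / 2) := fun t ht => by
    refine abs_le_of_sq_le_sq ?_ (by positivity)
    have i := hP.ct
    have i1 : Continuous (Pt t) := by
      have : Continuous (fun x => Pt t x) := by fun_prop
      exact this
    have h1 := mean_sq_le i1
    have h2 : kP t ≤ C' * exp (-(1 * t)) := by
      have := hdec' t ht
      rw [hEt] at this
      linarith [nkP t, nkQ t, nvP t, nvQ t]
    rw [hkP, kinP, etwo, one_mul] at h2
    have h3 : exp t * exp t * exp (-(2 * t)) = 1 := by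
      rw [← exp_add, ← exp_add]; simp; ring
    have h4 : exp t * exp (-t) = 1 := by rw [← exp_add]; simp
    have h5 := mul_le_mul_of_nonneg_left h2 (by positivity : 0 ≤ exp t * exp t)
    have h6 : II (fun x => Pt t x ^ 2) ≤ C' * exp t := by
      calc II (fun x => Pt t x ^ 2)
          = exp t * exp t * (exp (-(2 * t)) * II (fun x => Pt t x ^ 2)) := by
            rw [← mul_assoc, h3, one_mul]
        _ ≤ exp t * exp t * (C' * exp (-t)) := h5
        _ = C' * exp t * (exp t * exp (-t)) := by ring
        _ = C' * exp t := by rw [h4, mul_one]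
    have h7 : (√C' * exp (t / 2)) ^ 2 = C' * exp t := by
      rw [mul_pow, Real.sq_sqrt hC', ← exp_nat_mul]
      congr 2
      push_cast; ring
    rw [h7]
    have h8 : 1 ≤ 2 * π := by linarith [Real.pi_gt_three]
    nlinarith [sq_nonneg (mean (Pt t))]
  have hexp : ∀ t : ℝ, HasDerivAt (fun t => 2 * √C' * exp (t / 2)) (√C' * exp (t / 2)) t := by
    intro t
    have h1 : HasDerivAt (fun t : ℝ => exp (t / 2)) (exp (t / 2) * (1 / 2)) t :=
      ((hasDerivAt_id t).div_const 2).exp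
    refine (h1.const_mul (2 * √C')).congr_deriv ?_
    ring
  have up : AntitoneOn (fun t => mean (P t) - 2 * √C' * exp (t / 2)) (Ici t₀) :=
    anti_of_deriv (fun t _ => (mean_hasDerivAt hP t).sub (hexp t))
      (fun t ht => by have := (abs_le.1 (hmd t ht)).2; linarith)
  have dn : AntitoneOn (fun t => -mean (P t) - 2 * √C' * exp (t / 2)) (Ici t₀) :=
    anti_of_deriv (fun t _ => (mean_hasDerivAt hP t).neg.sub (hexp t))
      (fun t ht => by have := (abs_le.1 (hmd t ht)).1; linarith)
  refine ⟨|mean (P t₀)| + D + 2 * √C', by positivity, fun t ht x hx => ?_⟩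
  have u := up (mem_Ici.2 le_rfl) (mem_Ici.2 ht) ht
  have d := dn (mem_Ici.2 le_rfl) (mem_Ici.2 ht) ht
  simp only at u d
  have o := abs_le.1 ((osc t x hx).trans (δD t ht))
  have h1 : 1 ≤ exp (t / 2) := one_le_exp (by linarith)
  have h0 : 0 ≤ 2 * √C' * exp (t₀ / 2) := by positivity
  have h2 : |mean (P t₀)| + D ≤ (|mean (P t₀)| + D) * exp (t / 2) :=
    le_mul_of_one_le_right (by positivity) h1
  have h3 := le_abs_self (mean (P t₀))
  have h4 := neg_abs_le (mean (P t₀))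
  rw [abs_le]
  constructor <;> linarith

end sys2

/-! ### Smooth functions and the change of time variable -/

theorem smooth_CTwo {f : ℝ → ℝ → ℝ} (hf : ContDiff ℝ (⊤ : ℕ∞) (Function.uncurry f))
    (hper : ∀ t x, f t (x + 2 * π) = f t x) :
    ∃ ft fx ftt ftx fxx, CTwo f ft fx ftt ftx fxx := by
  have key : ∀ g : ℝ × ℝ → ℝ, ContDiff ℝ (⊤ : ℕ∞) g → ∀ v : ℝ × ℝ,
      ContDiff ℝ (⊤ : ℕ∞) (fun z => fderiv ℝ g z v) := by
    intro g hg v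
    exact (hg.fderiv_right (m := (⊤ : ℕ∞)) (by simp)).clm_apply contDiff_const
  have d1 : ∀ g : ℝ × ℝ → ℝ, ContDiff ℝ (⊤ : ℕ∞) g → ∀ t x,
      HasDerivAt (fun s => g (s, x)) (fderiv ℝ g (t, x) (1, 0)) t := by
    intro g hg t x
    have h1 : HasFDerivAt g (fderiv ℝ g (t, x)) (t, x) :=
      (hg.differentiable (by simp) (t, x)).hasFDerivAt
    exact h1.comp_hasDerivAt t ((hasDerivAt_id t).prodMk (hasDerivAt_const t x))
  have d2 : ∀ g : ℝ × ℝ → ℝ, ContDiff ℝ (⊤ : ℕ∞) g → ∀ t x,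
      HasDerivAt (fun y => g (t, y)) (fderiv ℝ g (t, x) (0, 1)) x := by
    intro g hg t x
    have h1 : HasFDerivAt g (fderiv ℝ g (t, x)) (t, x) :=
      (hg.differentiable (by simp) (t, x)).hasFDerivAt
    exact h1.comp_hasDerivAt x ((hasDerivAt_const x t).prodMk (hasDerivAt_id x))
  obtain ⟨g, hg⟩ : ∃ g, g = Function.uncurry f := ⟨_, rfl⟩
  rw [← hg] at hf
  have hgf : ∀ t x, f t x = g (t, x) := fun t x => by rw [hg]; rfl
  have hf1 := key g hf (1, 0)
  have hf2 := key g hf (0, 1)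
  have sym : ∀ z, fderiv ℝ (fun z => fderiv ℝ g z (0, 1)) z (1, 0)
      = fderiv ℝ (fun z => fderiv ℝ g z (1, 0)) z (0, 1) := by
    intro z
    have hd : DifferentiableAt ℝ (fderiv ℝ g) z :=
      (hf.fderiv_right (m := (⊤ : ℕ∞)) (by simp)).differentiable (by simp) z
    have hs := second_derivative_symmetric (f := g) (f' := fderiv ℝ g)
      (fun y => (hf.differentiable (by simp) y).hasFDerivAt) hd.hasFDerivAt (1, 0) (0, 1)
    have e : ∀ v w : ℝ × ℝ, fderiv ℝ (fun z => fderiv ℝ g z v) z w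
        = fderiv ℝ (fderiv ℝ g) z w v := by
      intro v w
      have h := hd.hasFDerivAt.clm_apply (hasFDerivAt_const v z)
      rw [h.fderiv]
      simp
    rw [e, e, hs]
  have eta : ∀ h : ℝ × ℝ → ℝ, Continuous h → Continuous (fun z : ℝ × ℝ => h (z.1, z.2)) :=
    fun h hh => by fun_prop
  have perd : ∀ t x, g (t, x + 2 * π) = g (t, x) := fun t x => by rw [← hgf, ← hgf, hper]
  refine ⟨fun t x => fderiv ℝ g (t, x) (1, 0), fun t x => fderiv ℝ g (t, x) (0, 1),
    fun t x => fderiv ℝ (fun z => fderiv ℝ g z (1, 0)) (t, x) (1, 0),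
    fun t x => fderiv ℝ (fun z => fderiv ℝ g z (1, 0)) (t, x) (0, 1),
    fun t x => fderiv ℝ (fun z => fderiv ℝ g z (0, 1)) (t, x) (0, 1), ?_⟩
  have hfun : f = fun t x => g (t, x) := by funext t x; exact hgf t x
  rw [hfun]
  constructor
  · exact eta _ hf.continuous
  · exact eta _ hf1.continuous
  · exact eta _ hf2.continuous
  · exact eta _ (key _ hf1 (1, 0)).continuous
  · exact eta _ (key _ hf1 (0, 1)).continuous
  · exact eta _ (key _ hf2 (0, 1)).continuous
  · exact d1 g hf
  · exact d2 g hf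
  · exact d1 _ hf1
  · intro t x
    have := d1 _ hf2 t x
    rw [sym] at this
    exact this
  · exact d2 _ hf1
  · exact d2 _ hf2
  · intro t
    have := perd t 0
    rwa [zero_add] at this
  · intro t
    have h1 := d1 g hf t (2 * π)
    have h2 : (fun s => g (s, 2 * π)) = fun s => g (s, 0) := by
      funext s
      have := perd s 0
      rwa [zero_add] at this
    rw [h2] at h1
    exact h1.unique (d1 g hf t 0)
  · intro t
    have h1 : HasDerivAt (fun y => g (t, y + 2 * π)) (fderiv ℝ g (t, 0 + 2 * π) (0, 1)) 0 :=
      (d2 g hf t (0 + 2 * π)).comp_add_const 0 (2 * π)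
    have h2 : (fun y => g (t, y + 2 * π)) = fun y => g (t, y) := by
      funext y
      exact perd t y
    rw [h2, zero_add] at h1
    exact h1.unique (d2 g hf t 0)

theorem CTwo_exp {f ft fx ftt ftx fxx : ℝ → ℝ → ℝ} (h : CTwo f ft fx ftt ftx fxx) (a b : ℝ) :
    CTwo (fun t x => a * f (exp t) x - b * t) (fun t x => a * (ft (exp t) x * exp t) - b)
      (fun t x => a * fx (exp t) x)
      (fun t x => a * (ftt (exp t) x * exp t * exp t + ft (exp t) x * exp t))
      (fun t x => a * (ftx (exp t) x * exp t)) (fun t x => a * fxx (exp t) x) := by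
  obtain ⟨c, ct, cx, ctt, ctx, cxx, dt, dx, dtt, dxt, dtx, dxx, per, pert, perx⟩ := h
  have chain : ∀ (g g' : ℝ → ℝ → ℝ), (∀ t x, HasDerivAt (fun s => g s x) (g' t x) t) → ∀ t x,
      HasDerivAt (fun s => g (exp s) x) (g' (exp t) x * exp t) t := by
    intro g g' hg t x
    exact (hg (exp t) x).comp t (Real.hasDerivAt_exp t)
  constructor
  · fun_prop
  · fun_prop
  · fun_prop
  · fun_prop
  · fun_prop
  · fun_prop
  · intro t x
    have := ((chain f ft dt t x).const_mul a).sub ((hasDerivAt_id t).const_mul b)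
    rw [mul_one] at this
    exact this
  · intro t x
    exact ((dx (exp t) x).const_mul a).sub_const _
  · intro t x
    exact (((chain ft ftt dtt t x).mul (Real.hasDerivAt_exp t)).const_mul a).sub_const _
  · intro t x
    exact (chain fx ftx dxt t x).const_mul a
  · intro t x
    exact (((dtx (exp t) x).mul_const _).const_mul a).sub_const _
  · intro t x
    exact (dxx (exp t) x).const_mul a
  · intro t; simp only [per]
  · intro t; simp only [pert]
  · intro t; simp only [perx]

theorem stmt12
    (R₀ : ℝ) (hR₀ : 0 < R₀)
    (U A : ℝ → ℝ → ℝ)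
    (hU : ContDiff ℝ (⊤ : ℕ∞) (Function.uncurry U))
    (hA : ContDiff ℝ (⊤ : ℕ∞) (Function.uncurry A))
    (hUper : ∀ R θ, U R (θ + 2 * π) = U R θ)
    (hAper : ∀ R θ, A R (θ + 2 * π) = A R θ)
    (eqU : ∀ R, R₀ ≤ R → ∀ θ : ℝ,
      deriv (fun r => r * pdR U r θ) R - deriv (fun t => R * pdT U R t) θ
        = exp (4 * U R θ) / (2 * R) * ((pdR A R θ) ^ 2 - (pdT A R θ) ^ 2))
    (eqA : ∀ R, R₀ ≤ R → ∀ θ : ℝ,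
      deriv (fun r => r⁻¹ * pdR A r θ) R - deriv (fun t => R⁻¹ * pdT A R t) θ
        = 4 / R * (-(pdR U R θ * pdR A R θ) + pdT U R θ * pdT A R θ))
 :
    ∃ C : ℝ, 0 < C ∧ ∀ R, R₀ ≤ R → ∀ θ : ℝ, |U R θ| ≤ C * Real.sqrt R := by
  have hπ := Real.pi_pos
  obtain ⟨Ut, Ux, Utt, Utx, Uxx, hU2⟩ := smooth_CTwo hU hUper
  obtain ⟨At, Ax, Att, Atx, Axx, hA2⟩ := smooth_CTwo hA hAper
  have pU : pdR U = Ut := by funext r x; exact (hU2.dt r x).deriv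
  have pUx : pdT U = Ux := by funext r x; exact (hU2.dx r x).deriv
  have pA : pdR A = At := by funext r x; exact (hA2.dt r x).deriv
  have pAx : pdT A = Ax := by funext r x; exact (hA2.dx r x).deriv
  rw [pU, pUx, pA, pAx] at eqU
  rw [pU, pUx, pA, pAx] at eqA
  have qU : ∀ R, R₀ ≤ R → ∀ θ, Ut R θ + R * Utt R θ - R * Uxx R θ
      = exp (4 * U R θ) / (2 * R) * ((At R θ) ^ 2 - (Ax R θ) ^ 2) := by
    intro R hR θ
    rw [← eqU R hR θ]
    have h1 : HasDerivAt (fun r => r * Ut r θ) (1 * Ut R θ + R * Utt R θ) R :=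
      (hasDerivAt_id R).mul (hU2.dtt R θ)
    rw [h1.deriv, ((hU2.dxx R θ).const_mul R).deriv, one_mul]
  have qA : ∀ R, R₀ ≤ R → ∀ θ, -(R ^ 2)⁻¹ * At R θ + R⁻¹ * Att R θ - R⁻¹ * Axx R θ
      = 4 / R * (-(Ut R θ * At R θ) + Ux R θ * Ax R θ) := by
    intro R hR θ
    rw [← eqA R hR θ]
    have hR0 : R ≠ 0 := by linarith
    have h1 : HasDerivAt (fun r => r⁻¹ * At r θ) (-(R ^ 2)⁻¹ * At R θ + R⁻¹ * Att R θ) R :=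
      (hasDerivAt_inv hR0).mul (hA2.dtt R θ)
    rw [h1.deriv, ((hA2.dxx R θ).const_mul R⁻¹).deriv]
  have hP := CTwo_exp hU2 2 1
  have hQ := CTwo_exp hA2 1 0
  obtain ⟨R₁, hR₁⟩ : ∃ R₁, R₁ = max R₀ 1 := ⟨_, rfl⟩
  have hR₁1 : 1 ≤ R₁ := by rw [hR₁]; exact le_max_right _ _
  have hR₁0 : R₀ ≤ R₁ := by rw [hR₁]; exact le_max_left _ _
  have hlog : ∀ t, Real.log R₁ ≤ t → R₀ ≤ exp t := by
    intro t ht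
    refine hR₁0.trans ?_
    rw [← Real.exp_log (by linarith : 0 < R₁)]
    exact exp_le_exp.2 ht
  have het : ∀ t, etwo t = ((exp t) ^ 2)⁻¹ := by
    intro t
    rw [etwo, exp_neg, ← exp_nat_mul]
    norm_num
  obtain ⟨C, hC, hmain⟩ := core_s12 hP hQ (t₀ := Real.log R₁) (Real.log_nonneg hR₁1)
    (by
      intro t ht x
      have h := qU (exp t) (hlog t ht) x
      have hw : exp (2 * (2 * U (exp t) x - 1 * t)) = exp (4 * U (exp t) x) * etwo t := by
        rw [etwo, ← exp_add]; ring_nf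
      rw [hw, het]
      have he := (exp_pos t).ne'
      generalize exp t = R at *
      field_simp at h ⊢
      linear_combination R ^ 2 * h)
    (by
      intro t ht x
      have h := qA (exp t) (hlog t ht) x
      rw [het]
      have he := (exp_pos t).ne'
      generalize exp t = R at *
      field_simp at h ⊢
      linear_combination R * h)
  have hK : IsCompact (Icc R₀ R₁ ×ˢ Icc (0 : ℝ) (2 * π)) := isCompact_Icc.prod isCompact_Icc
  obtain ⟨K, hK'⟩ := hK.exists_bound_of_continuousOn hU.continuous.continuousOn
  have hs0 : 0 < √R₀ := Real.sqrt_pos.2 hR₀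
  refine ⟨|K| / √R₀ + (C + 2) + 1, by positivity, fun R hR θ => ?_⟩
  have hper : Function.Periodic (U R) (2 * π) := hUper R
  obtain ⟨y, hy, hyθ⟩ := hper.exists_mem_Ico₀ (by positivity) θ
  rw [hyθ]
  have hy' : y ∈ Icc (0 : ℝ) (2 * π) := ⟨hy.1, hy.2.le⟩
  have hRpos : 0 < R := by linarith
  have hsR := Real.sqrt_nonneg R
  have hKR : |K| ≤ |K| / √R₀ * √R := by
    rw [div_mul_eq_mul_div, le_div_iff₀ hs0]
    exact mul_le_mul_of_nonneg_left (Real.sqrt_le_sqrt hR) (abs_nonneg K)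
  rcases le_total R R₁ with h | h
  · have h1 : |U R y| ≤ K := hK' (R, y) ⟨⟨hR, h⟩, hy'⟩
    have h2 := le_abs_self K
    have h3 : 0 ≤ (C + 2) * √R := by positivity
    linarith
  · have h1 := hmain (Real.log R) (Real.log_le_log (by linarith) h) y hy'
    have h2 : exp (Real.log R / 2) = √R := by
      rw [Real.sqrt_eq_rpow, Real.rpow_def_of_pos hRpos]; ring_nf
    rw [h2, Real.exp_log hRpos] at h1
    have h3 : Real.log R ≤ 2 * √R := by
      have h4 := Real.add_one_le_exp (Real.log R / 2)
      rw [h2] at h4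
      linarith
    have h5 : 0 ≤ Real.log R := Real.log_nonneg (by linarith)
    have h6 := abs_le.1 h1
    have h7 : 0 ≤ |K| / √R₀ * √R := by positivity
    have h8 : 0 ≤ C * √R := by positivity
    rw [abs_le]
    constructor <;> linarith
end
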